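/- arXiv:1105.4489 — 5 statements merged into one kernel-verified Lean document; each statement's English description precedes it below -/
import Mathlib

section
/- Let λ : ℝ⁷ × ℝ⁷ → ℝ⁷ be a skew-symmetric bilinear map such that the diagonal map D = diag(1,1,2,3,3,4,5) (with respect to the canonical basis e_1,...,e_7) is a derivation of λ, i.e. Dλ(X,Y) = λ(DX,Y) + λ(X,DY) for all X,Y. Then λ(e_1,e_2) ∈ span(e_3), λ(e_1,e_3) ∈ span(e_4,e_5), λ(e_1,e_4) ∈ span(e_6), λ(e_1,e_5) ∈ span(e_6), λ(e_1,e_6) ∈ span(e_7), λ(e_2,e_3) ∈ span(e_4,e_5), λ(e_2,e_4) ∈ span(e_6), λ(e_2,e_5) ∈ span(e_6), λ(e_2,e_6) ∈ span(e_7), λ(e_3,e_4) ∈ span(e_7), λ(e_3,e_5) ∈ span(e_7), and λ(e_i,e_j) = 0 for every other pair i < j. -/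
open Matrix BigOperators Polynomial

noncomputable section

abbrev Law (n : ℕ) := (Fin n → ℝ) → (Fin n → ℝ) → (Fin n → ℝ)

/-- `i`-th canonical basis vector of `ℝ^n`. -/
def bVec {n : ℕ} (i : Fin n) : Fin n → ℝ := Pi.single i 1

def IsBilin {n : ℕ} (μ : Law n) : Prop :=
  (∀ X, IsLinearMap ℝ (μ X)) ∧ (∀ Y, IsLinearMap ℝ (fun X => μ X Y))

def IsSkew {n : ℕ} (μ : Law n) : Prop := ∀ X Y, μ X Y = - μ Y X

def IsJacobi {n : ℕ} (μ : Law n) : Prop :=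
  ∀ X Y Z, μ (μ X Y) Z + μ (μ Y Z) X + μ (μ Z X) Y = 0

def IsLieLaw {n : ℕ} (μ : Law n) : Prop := IsBilin μ ∧ IsSkew μ ∧ IsJacobi μ

/-- lower central series of the law `μ`. -/
def lcs {n : ℕ} (μ : Law n) : ℕ → Submodule ℝ (Fin n → ℝ)
  | 0 => ⊤
  | k + 1 => Submodule.span ℝ {z | ∃ x y, y ∈ lcs μ k ∧ z = μ x y}

def IsNilpotentLaw {n : ℕ} (μ : Law n) : Prop :=
  IsLieLaw μ ∧ ∃ k, lcs μ k = ⊥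

/-- the action of `GL_n(ℝ)` on laws: `(g·μ)(X,Y) = g μ(g⁻¹X, g⁻¹Y)`. -/
def act {n : ℕ} (g : GL (Fin n) ℝ) (μ : Law n) : Law n :=
  fun X Y =>
    (g : Matrix (Fin n) (Fin n) ℝ).mulVec
      (μ (((g⁻¹ : GL (Fin n) ℝ) : Matrix (Fin n) (Fin n) ℝ).mulVec X)
         (((g⁻¹ : GL (Fin n) ℝ) : Matrix (Fin n) (Fin n) ℝ).mulVec Y))

def IsDerivation {n : ℕ} (μ : Law n) (ψ : Matrix (Fin n) (Fin n) ℝ) : Prop :=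
  ∀ X Y, ψ.mulVec (μ X Y) = μ (ψ.mulVec X) Y + μ X (ψ.mulVec Y)

/-- the unnormalized moment map `m(μ) = 4 Ric_μ`, as a matrix in the canonical basis. -/
def momentMap {n : ℕ} (μ : Law n) : Matrix (Fin n) (Fin n) ℝ :=
  Matrix.of fun k l =>
    4 * (-(1/2) * ∑ i, ∑ j, μ (bVec k) (bVec i) j * μ (bVec l) (bVec i) j
      + (1/4) * ∑ i, ∑ j, μ (bVec i) (bVec j) k * μ (bVec i) (bVec j) l)

def IsEinsteinNilradical {n : ℕ} (μ : Law n) : Prop :=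
  ∃ g : GL (Fin n) ℝ, ∃ c : ℝ, ∃ φ : Matrix (Fin n) (Fin n) ℝ,
    c < 0 ∧ φ.IsSymm ∧ IsDerivation (act g μ) φ ∧
    momentMap (act g μ) = c • (1 : Matrix (Fin n) (Fin n) ℝ) + φ

/-- build a (bilinear) law from a table `c` of structure constants on the
canonical basis, antisymmetrized: `[e_i, e_j] = c i j - c j i`. -/
def mkLaw {n : ℕ} (c : Fin n → Fin n → Fin n → ℝ) : Law n :=
  fun X Y k => ∑ i, ∑ j, X i * Y j * (c i j k - c j i k)

/-! A bilinear map for which `D` is a derivation sends eigenvectors of `D` with eigenvalues `a` and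
`c` into the eigenspace of `a + c`. When `D` is diagonal in a basis, that eigenspace is spanned by
the basis vectors of weight `a + c`, so the table is the list of coincidences `w k = w i + w j`
among the seven weights. -/

section Eigenspaces

variable {R M N P ι : Type*} [CommRing R] [AddCommGroup M] [Module R M]
  [AddCommGroup N] [Module R N] [AddCommGroup P] [Module R P]

theorem apply_apply_mem_eigenspace_add {B : M →ₗ[R] N →ₗ[R] P}
    {D : Module.End R M} {E : Module.End R N} {F : Module.End R P}
    (leibniz : ∀ x y, F (B x y) = B (D x) y + B x (E y)) {a c : R} {x : M} {y : N}
    (hx : x ∈ D.eigenspace a) (hy : y ∈ E.eigenspace c) :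
    B x y ∈ F.eigenspace (a + c) := by
  rw [Module.End.mem_eigenspace_iff] at hx hy ⊢
  rw [leibniz, hx, hy, map_smul, LinearMap.smul_apply, map_smul, add_smul]

variable {b : Module.Basis ι R M} {d : ι → R} {D : Module.End R M}

theorem repr_apply_of_diagonal (hD : ∀ i, D (b i) = d i • b i) (v : M) (i : ι) :
    b.repr (D v) i = d i * b.repr v i := by
  classical
  suffices h : b.coord i ∘ₗ D = d i • b.coord i from LinearMap.congr_fun h v
  refine b.ext fun j ↦ ?_
  by_cases hji : j = i <;> simp [hD, hji]

theorem eigenspace_eq_span_image_of_diagonal [NoZeroDivisors R]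
    (hD : ∀ i, D (b i) = d i • b i) (a : R) :
    D.eigenspace a = Submodule.span R (b '' {i | d i = a}) := by
  ext v
  calc v ∈ D.eigenspace a
      ↔ ∀ i, d i * b.repr v i = a * b.repr v i := by
        simp only [Module.End.mem_eigenspace_iff, b.ext_elem_iff, repr_apply_of_diagonal hD,
          map_smul, Finsupp.smul_apply, smul_eq_mul]
    _ ↔ ∀ i, b.repr v i ≠ 0 → d i = a := by
        simp only [mul_eq_mul_right_iff, or_iff_not_imp_right, ne_eq]
    _ ↔ v ∈ Submodule.span R (b '' {i | d i = a}) := by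
        simp only [b.mem_span_image, Set.subset_def, Finset.mem_coe, Finsupp.mem_support_iff,
          Set.mem_ofPred_eq]

theorem apply_basis_mem_span_image_of_leibniz [NoZeroDivisors R] {B : M →ₗ[R] M →ₗ[R] M}
    (leibniz : ∀ x y, D (B x y) = B (D x) y + B x (D y))
    (hD : ∀ i, D (b i) = d i • b i) (i j : ι) :
    B (b i) (b j) ∈ Submodule.span R (b '' {k | d k = d i + d j}) := by
  have mem_eigenspace (l : ι) : b l ∈ D.eigenspace (d l) :=
    Module.End.mem_eigenspace_iff.mpr (hD l)
  rw [← eigenspace_eq_span_image_of_diagonal hD]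
  exact apply_apply_mem_eigenspace_add leibniz (mem_eigenspace i) (mem_eigenspace j)

theorem apply_basis_mem_span_image_of_natCast_weights [NoZeroDivisors R] [CharZero R]
    {B : M →ₗ[R] M →ₗ[R] M} {w : ι → ℕ}
    (leibniz : ∀ x y, D (B x y) = B (D x) y + B x (D y))
    (hD : ∀ i, D (b i) = (w i : R) • b i) {i j : ι} {s : Set ι}
    (hs : ∀ k, w k = w i + w j → k ∈ s) :
    B (b i) (b j) ∈ Submodule.span R (b '' s) := by
  refine Submodule.span_mono (Set.image_mono fun k hk ↦ hs k ?_)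
    (apply_basis_mem_span_image_of_leibniz leibniz hD i j)
  exact_mod_cast hk

end Eigenspaces

theorem basisFun_eq_bVec {n : ℕ} (i : Fin n) : Pi.basisFun ℝ (Fin n) i = bVec i :=
  Pi.basisFun_apply ℝ (Fin n) i

/-- A law satisfying `IsBilin`, bundled as a bilinear map so that Mathlib's theory of linear maps
applies to it. -/
def IsBilin.toLinearMap₂ {n : ℕ} {μ : Law n} (h : IsBilin μ) :
    (Fin n → ℝ) →ₗ[ℝ] (Fin n → ℝ) →ₗ[ℝ] (Fin n → ℝ) :=
  LinearMap.mk₂ ℝ μ (fun X X' Y ↦ (h.2 Y).map_add X X') (fun c X Y ↦ (h.2 Y).map_smul c X)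
    (fun X ↦ (h.1 X).map_add) (fun c X ↦ (h.1 X).map_smul c)

theorem IsBilin.toLinearMap₂_apply {n : ℕ} {μ : Law n} (h : IsBilin μ) (X Y : Fin n → ℝ) :
    h.toLinearMap₂ X Y = μ X Y :=
  rfl

theorem stmt_2_general {R M : Type*} [CommRing R] [NoZeroDivisors R] [CharZero R]
    [AddCommGroup M] [Module R M] {b : Module.Basis (Fin 7) R M}
    {B : M →ₗ[R] M →ₗ[R] M} {D : Module.End R M}
    (leibniz : ∀ x y, D (B x y) = B (D x) y + B x (D y))
    (hD : ∀ i, D (b i) = (![1, 1, 2, 3, 3, 4, 5] : Fin 7 → R) i • b i) :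
    B (b 0) (b 1) ∈ Submodule.span R {b 2} ∧
    B (b 0) (b 2) ∈ Submodule.span R {b 3, b 4} ∧
    B (b 0) (b 3) ∈ Submodule.span R {b 5} ∧
    B (b 0) (b 4) ∈ Submodule.span R {b 5} ∧
    B (b 0) (b 5) ∈ Submodule.span R {b 6} ∧
    B (b 1) (b 2) ∈ Submodule.span R {b 3, b 4} ∧
    B (b 1) (b 3) ∈ Submodule.span R {b 5} ∧
    B (b 1) (b 4) ∈ Submodule.span R {b 5} ∧
    B (b 1) (b 5) ∈ Submodule.span R {b 6} ∧
    B (b 2) (b 3) ∈ Submodule.span R {b 6} ∧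
    B (b 2) (b 4) ∈ Submodule.span R {b 6} ∧
    (∀ i j : Fin 7, i < j →
      (i, j) ∉ ({(0, 1), (0, 2), (0, 3), (0, 4), (0, 5), (1, 2), (1, 3), (1, 4),
        (1, 5), (2, 3), (2, 4)} : Set (Fin 7 × Fin 7)) →
      B (b i) (b j) = 0) := by
  let w : Fin 7 → ℕ := ![1, 1, 2, 3, 3, 4, 5]
  have hw (i : Fin 7) : D (b i) = (w i : R) • b i := by
    rw [hD]
    fin_cases i <;> simp [w]
  have graded {i j : Fin 7} {s : Set (Fin 7)} (hs : ∀ k, w k = w i + w j → k ∈ s) :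
      B (b i) (b j) ∈ Submodule.span R (b '' s) :=
    apply_basis_mem_span_image_of_natCast_weights leibniz hw hs
  have mem_span_singleton {i j k : Fin 7} (h : ∀ l, w l = w i + w j → l = k) :
      B (b i) (b j) ∈ Submodule.span R {b k} :=
    Set.image_singleton (f := b) ▸ graded h
  have mem_span_pair {i j k l : Fin 7} (h : ∀ m, w m = w i + w j → m = k ∨ m = l) :
      B (b i) (b j) ∈ Submodule.span R {b k, b l} :=
    Set.image_pair b k l ▸ graded h
  have eq_zero {i j : Fin 7} (h : ∀ k, w k ≠ w i + w j) : B (b i) (b j) = 0 := by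
    simpa using graded (s := ∅) h
  refine ⟨mem_span_singleton (by decide), mem_span_pair (by decide),
    mem_span_singleton (by decide), mem_span_singleton (by decide),
    mem_span_singleton (by decide), mem_span_pair (by decide),
    mem_span_singleton (by decide), mem_span_singleton (by decide),
    mem_span_singleton (by decide), mem_span_singleton (by decide),
    mem_span_singleton (by decide), fun i j hij hne ↦ eq_zero ?_⟩
  simp only [Set.mem_insert_iff, Set.mem_singleton_iff] at hne
  revert i j
  decide

/-- the form of any skew bilinear map on ℝ⁷ admitting
`diag(1,1,2,3,3,4,5)` as a derivation. -/
theorem stmt_2 (lam : Law 7) (hbil : IsBilin lam) (hskew : IsSkew lam)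
    (hder : IsDerivation lam
      (Matrix.diagonal (![1, 1, 2, 3, 3, 4, 5] : Fin 7 → ℝ))) :
    lam (bVec 0) (bVec 1) ∈ Submodule.span ℝ {bVec (2 : Fin 7)} ∧
    lam (bVec 0) (bVec 2) ∈ Submodule.span ℝ {bVec (3 : Fin 7), bVec 4} ∧
    lam (bVec 0) (bVec 3) ∈ Submodule.span ℝ {bVec (5 : Fin 7)} ∧
    lam (bVec 0) (bVec 4) ∈ Submodule.span ℝ {bVec (5 : Fin 7)} ∧
    lam (bVec 0) (bVec 5) ∈ Submodule.span ℝ {bVec (6 : Fin 7)} ∧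
    lam (bVec 1) (bVec 2) ∈ Submodule.span ℝ {bVec (3 : Fin 7), bVec 4} ∧
    lam (bVec 1) (bVec 3) ∈ Submodule.span ℝ {bVec (5 : Fin 7)} ∧
    lam (bVec 1) (bVec 4) ∈ Submodule.span ℝ {bVec (5 : Fin 7)} ∧
    lam (bVec 1) (bVec 5) ∈ Submodule.span ℝ {bVec (6 : Fin 7)} ∧
    lam (bVec 2) (bVec 3) ∈ Submodule.span ℝ {bVec (6 : Fin 7)} ∧
    lam (bVec 2) (bVec 4) ∈ Submodule.span ℝ {bVec (6 : Fin 7)} ∧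
    (∀ i j : Fin 7, i < j →
      (i, j) ∉ ({(0, 1), (0, 2), (0, 3), (0, 4), (0, 5), (1, 2), (1, 3), (1, 4),
        (1, 5), (2, 3), (2, 4)} : Set (Fin 7 × Fin 7)) →
      lam (bVec i) (bVec j) = 0) := by
  simpa only [basisFun_eq_bVec, hbil.toLinearMap₂_apply] using
    stmt_2_general (B := hbil.toLinearMap₂) (D := toLin' (diagonal _)) hder
      fun i ↦ (hasEigenvector_toLin'_diagonal _ i).apply_eq_smul
end
end

section
/- For real parameters a_1, ..., a_13, let μ(a_1,...,a_13) be the skew-symmetric bilinear map on ℝ⁷ determined by [e_1,e_2]=a_1 e_3, [e_1,e_3]=a_2 e_4+a_3 e_5, [e_1,e_4]=a_4 e_6, [e_1,e_5]=a_5 e_6, [e_1,e_6]=a_6 e_7, [e_2,e_3]=a_7 e_4+a_8 e_5, [e_2,e_4]=a_9 e_6, [e_2,e_5]=a_10 e_6, [e_2,e_6]=a_11 e_7, [e_3,e_4]=a_12 e_7, [e_3,e_5]=a_13 e_7, all other brackets of basis vectors being zero. Then μ(a_1,...,a_13) satisfies the Jacobi identity if and only if −a_10 a_6 + a_5 a_11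 + a_1 a_13 = 0, −a_9 a_6 + a_4 a_11 + a_1 a_12 = 0, and −a_8 a_5 + a_3 a_10 − a_7 a_4 + a_2 a_9 = 0. -/
open Matrix BigOperators Polynomial

noncomputable section

/-- structure constants of the family `μ(a_1,...,a_13)` of skew bilinear maps
admitting `diag(1,1,2,3,3,4,5)` as a derivation. -/
def cParam (a1 a2 a3 a4 a5 a6 a7 a8 a9 a10 a11 a12 a13 : ℝ) :
    Fin 7 → Fin 7 → Fin 7 → ℝ := fun i j =>
  if i = 0 ∧ j = 1 then Pi.single 2 a1
  else if i = 0 ∧ j = 2 then Pi.single 3 a2 + Pi.single 4 a3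
  else if i = 0 ∧ j = 3 then Pi.single 5 a4
  else if i = 0 ∧ j = 4 then Pi.single 5 a5
  else if i = 0 ∧ j = 5 then Pi.single 6 a6
  else if i = 1 ∧ j = 2 then Pi.single 3 a7 + Pi.single 4 a8
  else if i = 1 ∧ j = 3 then Pi.single 5 a9
  else if i = 1 ∧ j = 4 then Pi.single 5 a10
  else if i = 1 ∧ j = 5 then Pi.single 6 a11
  else if i = 2 ∧ j = 3 then Pi.single 6 a12
  else if i = 2 ∧ j = 4 then Pi.single 6 a13
  else 0

/-!
The Jacobiator of a skew-symmetric bilinear law is an alternating trilinear map, so the Jacobi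
identity only has to be tested on triples `i < j < k` of basis vectors. A diagonal derivation with
eigenvalues `d` is also a derivation of the Jacobiator, so the `l`-th coordinate of the Jacobiator
of such a triple vanishes unless `d l = d i + d j + d k`. For `d = (1,1,2,3,3,4,5)` this leaves
three coordinates, which are the three polynomials in the parameters.
-/

theorem alternatingMap_ext_of_strictMono {R M N ι : Type*} [CommSemiring R] [AddCommMonoid M]
    [Module R M] [AddCommGroup N] [Module R N] [LinearOrder ι] {m : ℕ}
    {f g : M [⋀^Fin m]→ₗ[R] N} (e : Module.Basis ι R M)
    (h : ∀ v : Fin m → ι, StrictMono v → f (e ∘ v) = g (e ∘ v)) : f = g := by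
  refine e.ext_alternating fun v hv => ?_
  have hsort : StrictMono (v ∘ Tuple.sort v) :=
    (Tuple.monotone_sort v).strictMono_of_injective (hv.comp (Tuple.sort v).injective)
  have hsign := h _ hsort
  rw [← Function.comp_assoc, f.map_perm, g.map_perm] at hsign
  exact smul_left_cancel _ hsign

section Law

variable {n : ℕ} {μ : Law n}

theorem IsBilin.map_add_left (hμ : IsBilin μ) (X X' Y : Fin n → ℝ) :
    μ (X + X') Y = μ X Y + μ X' Y :=
  (hμ.2 Y).map_add X X'

theorem IsBilin.map_add_right (hμ : IsBilin μ) (X Y Y' : Fin n → ℝ) :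
    μ X (Y + Y') = μ X Y + μ X Y' :=
  (hμ.1 X).map_add Y Y'

theorem IsBilin.map_smul_left (hμ : IsBilin μ) (r : ℝ) (X Y : Fin n → ℝ) :
    μ (r • X) Y = r • μ X Y :=
  (hμ.2 Y).map_smul r X

theorem IsBilin.map_smul_right (hμ : IsBilin μ) (r : ℝ) (X Y : Fin n → ℝ) :
    μ X (r • Y) = r • μ X Y :=
  (hμ.1 X).map_smul r Y

theorem IsBilin.map_zero_left (hμ : IsBilin μ) (Y : Fin n → ℝ) : μ 0 Y = 0 :=
  (hμ.2 Y).map_zero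

theorem IsSkew.map_self (hμ : IsSkew μ) (X : Fin n → ℝ) : μ X X = 0 :=
  self_eq_neg.mp (hμ X X)

/-- The Jacobiator of a law: the cyclic sum whose vanishing is the Jacobi identity. -/
def jacobiator (μ : Law n) (X Y Z : Fin n → ℝ) : Fin n → ℝ :=
  μ (μ X Y) Z + μ (μ Y Z) X + μ (μ Z X) Y

theorem jacobiator_rotate (μ : Law n) (X Y Z : Fin n → ℝ) :
    jacobiator μ Y Z X = jacobiator μ X Y Z := by
  unfold jacobiator
  abel

theorem IsBilin.jacobiator_add_left (hμ : IsBilin μ) (X X' Y Z : Fin n → ℝ) :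
    jacobiator μ (X + X') Y Z = jacobiator μ X Y Z + jacobiator μ X' Y Z := by
  simp only [jacobiator, hμ.map_add_left, hμ.map_add_right]
  abel

theorem IsBilin.jacobiator_add_middle (hμ : IsBilin μ) (X Y Y' Z : Fin n → ℝ) :
    jacobiator μ X (Y + Y') Z = jacobiator μ X Y Z + jacobiator μ X Y' Z := by
  simp only [← jacobiator_rotate μ X, hμ.jacobiator_add_left]

theorem IsBilin.jacobiator_add_right (hμ : IsBilin μ) (X Y Z Z' : Fin n → ℝ) :
    jacobiator μ X Y (Z + Z') = jacobiator μ X Y Z + jacobiator μ X Y Z' := by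
  simp only [← jacobiator_rotate μ X, hμ.jacobiator_add_middle]

theorem IsBilin.jacobiator_smul_left (hμ : IsBilin μ) (r : ℝ) (X Y Z : Fin n → ℝ) :
    jacobiator μ (r • X) Y Z = r • jacobiator μ X Y Z := by
  simp only [jacobiator, hμ.map_smul_left, hμ.map_smul_right, smul_add]

theorem IsBilin.jacobiator_smul_middle (hμ : IsBilin μ) (r : ℝ) (X Y Z : Fin n → ℝ) :
    jacobiator μ X (r • Y) Z = r • jacobiator μ X Y Z := by
  rw [← jacobiator_rotate, hμ.jacobiator_smul_left, jacobiator_rotate]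

theorem IsBilin.jacobiator_smul_right (hμ : IsBilin μ) (r : ℝ) (X Y Z : Fin n → ℝ) :
    jacobiator μ X Y (r • Z) = r • jacobiator μ X Y Z := by
  rw [← jacobiator_rotate, hμ.jacobiator_smul_middle, jacobiator_rotate]

theorem IsBilin.jacobiator_self_left (hμ : IsBilin μ) (hskew : IsSkew μ) (X Z : Fin n → ℝ) :
    jacobiator μ X X Z = 0 := by
  rw [jacobiator, hskew.map_self, hμ.map_zero_left, zero_add, ← hμ.map_add_left, hskew X Z,
    neg_add_cancel, hμ.map_zero_left]

/-- The Jacobiator of a skew-symmetric bilinear law, bundled as an alternating map so that it is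
determined by its values on increasing triples of basis vectors. -/
def jacobiatorAlternatingMap (hμ : IsBilin μ) (hskew : IsSkew μ) :
    (Fin n → ℝ) [⋀^Fin 3]→ₗ[ℝ] (Fin n → ℝ) where
  toMultilinearMap := .mk' (fun v => jacobiator μ (v 0) (v 1) (v 2))
    (fun v i X X' => by
      fin_cases i <;>
        simp [hμ.jacobiator_add_left, hμ.jacobiator_add_middle, hμ.jacobiator_add_right])
    (fun v i r X => by
      fin_cases i <;>
        simp [hμ.jacobiator_smul_left, hμ.jacobiator_smul_middle, hμ.jacobiator_smul_right])
  map_eq_zero_of_eq' v i j hv hij := by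
    wlog hlt : i < j generalizing i j
    · exact this j i hv.symm hij.symm (hij.symm.lt_of_le (not_lt.mp hlt))
    have hself (X Y : Fin n → ℝ) : jacobiator μ X X Y = 0 := hμ.jacobiator_self_left hskew X Y
    change jacobiator μ (v 0) (v 1) (v 2) = 0
    obtain ⟨rfl, rfl⟩ | ⟨rfl, rfl⟩ | ⟨rfl, rfl⟩ :
        (i = 0 ∧ j = 1) ∨ (i = 0 ∧ j = 2) ∨ (i = 1 ∧ j = 2) := by lia
    · rw [hv, hself]
    · rw [hv, ← jacobiator_rotate, ← jacobiator_rotate, hself]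
    · rw [hv, ← jacobiator_rotate, hself]

theorem isJacobi_iff_jacobiator_bVec_eq_zero (hμ : IsBilin μ) (hskew : IsSkew μ) :
    IsJacobi μ ↔ ∀ i j k, i < j → j < k → jacobiator μ (bVec i) (bVec j) (bVec k) = 0 := by
  refine ⟨fun h i j k _ _ => h _ _ _, fun h X Y Z => ?_⟩
  suffices hzero : jacobiatorAlternatingMap hμ hskew = 0 from
    DFunLike.congr_fun hzero ![X, Y, Z]
  refine alternatingMap_ext_of_strictMono (Pi.basisFun ℝ (Fin n)) fun v hv => ?_
  have hv01 : v 0 < v 1 := hv (by decide)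
  have hv12 : v 1 < v 2 := hv (by decide)
  simpa [jacobiatorAlternatingMap, bVec] using h _ _ _ hv01 hv12

theorem IsDerivation.mulVec_jacobiator {ψ : Matrix (Fin n) (Fin n) ℝ} (hψ : IsDerivation μ ψ)
    (hμ : IsBilin μ) (X Y Z : Fin n → ℝ) :
    ψ *ᵥ jacobiator μ X Y Z =
      jacobiator μ (ψ *ᵥ X) Y Z + jacobiator μ X (ψ *ᵥ Y) Z + jacobiator μ X Y (ψ *ᵥ Z) := by
  simp only [jacobiator, mulVec_add, hψ _ _, hμ.map_add_left]
  abel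

theorem diagonal_mulVec_bVec (d : Fin n → ℝ) (i : Fin n) :
    diagonal d *ᵥ bVec i = d i • bVec i := by
  rw [bVec, diagonal_mulVec_single, ← Pi.single_smul', smul_eq_mul]

theorem IsDerivation.jacobiator_bVec_apply_eq_zero {d : Fin n → ℝ}
    (hd : IsDerivation μ (diagonal d)) (hμ : IsBilin μ) {i j k l : Fin n}
    (hl : d l ≠ d i + d j + d k) :
    jacobiator μ (bVec i) (bVec j) (bVec k) l = 0 := by
  have hder := congrFun (hd.mulVec_jacobiator hμ (bVec i) (bVec j) (bVec k)) l
  simp only [diagonal_mulVec_bVec, hμ.jacobiator_smul_left, hμ.jacobiator_smul_middle,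
    hμ.jacobiator_smul_right, mulVec_diagonal, Pi.add_apply, Pi.smul_apply, smul_eq_mul] at hder
  refine (mul_eq_zero.mp ?_).resolve_left (sub_ne_zero.mpr hl)
  linear_combination hder

theorem isJacobi_iff_of_isDerivation_diagonal {d : Fin n → ℝ} (hμ : IsBilin μ)
    (hskew : IsSkew μ) (hd : IsDerivation μ (diagonal d)) :
    IsJacobi μ ↔ ∀ i j k l, i < j → j < k → d l = d i + d j + d k →
      jacobiator μ (bVec i) (bVec j) (bVec k) l = 0 := by
  rw [isJacobi_iff_jacobiator_bVec_eq_zero hμ hskew]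
  refine ⟨fun h i j k l hij hjk _ => congrFun (h i j k hij hjk) l,
    fun h i j k hij hjk => funext fun l => ?_⟩
  by_cases hl : d l = d i + d j + d k
  · exact h i j k l hij hjk hl
  · exact hd.jacobiator_bVec_apply_eq_zero hμ hl

end Law

section StructureConstants

variable {n : ℕ} (c : Fin n → Fin n → Fin n → ℝ)

theorem isBilin_mkLaw : IsBilin (mkLaw c) := by
  refine ⟨fun X => ⟨fun Y Y' => ?_, fun r Y => ?_⟩, fun Y => ⟨fun X X' => ?_, fun r X => ?_⟩⟩ <;>
  · ext k
    simp only [mkLaw, Pi.add_apply, Pi.smul_apply, smul_eq_mul, ← Finset.sum_add_distrib,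
      Finset.mul_sum]
    refine Finset.sum_congr rfl fun i _ => Finset.sum_congr rfl fun j _ => ?_
    ring

theorem isSkew_mkLaw : IsSkew (mkLaw c) := by
  intro X Y
  ext k
  simp only [mkLaw, Pi.neg_apply, ← Finset.sum_neg_distrib]
  rw [Finset.sum_comm]
  refine Finset.sum_congr rfl fun i _ => Finset.sum_congr rfl fun j _ => ?_
  ring

theorem mkLaw_bVec_right_apply (X : Fin n → ℝ) (j k : Fin n) :
    mkLaw c X (bVec j) k = ∑ i, X i * (c i j k - c j i k) := by
  simp [mkLaw, bVec, Pi.single_apply]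

theorem mkLaw_bVec_bVec_apply (i j k : Fin n) :
    mkLaw c (bVec i) (bVec j) k = c i j k - c j i k := by
  rw [mkLaw_bVec_right_apply]
  simp [bVec, Pi.single_apply]

theorem jacobiator_mkLaw_bVec_apply (i j k l : Fin n) :
    jacobiator (mkLaw c) (bVec i) (bVec j) (bVec k) l =
      ∑ m, ((c i j m - c j i m) * (c m k l - c k m l) +
        (c j k m - c k j m) * (c m i l - c i m l) +
        (c k i m - c i k m) * (c m j l - c j m l)) := by
  simp only [jacobiator, Pi.add_apply, mkLaw_bVec_right_apply c (mkLaw _ _ _),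
    mkLaw_bVec_bVec_apply, Finset.sum_add_distrib]

variable {c} in
theorem isDerivation_mkLaw_diagonal {d : Fin n → ℝ}
    (hd : ∀ i j k, c i j k ≠ 0 → d k = d i + d j) :
    IsDerivation (mkLaw c) (diagonal d) := by
  have hscale (i j k : Fin n) : d k * c i j k = (d i + d j) * c i j k := by
    by_cases hc : c i j k = 0
    · rw [hc, mul_zero, mul_zero]
    · rw [hd i j k hc]
  intro X Y
  ext k
  simp only [mkLaw, mulVec_diagonal, Pi.add_apply, Finset.mul_sum, ← Finset.sum_add_distrib]
  refine Finset.sum_congr rfl fun i _ => Finset.sum_congr rfl fun j _ => ?_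
  linear_combination X i * Y j * (hscale i j k - hscale j i k)

end StructureConstants

section Parameters

/-- The eigenvalues of the derivation `diag(1,1,2,3,3,4,5)` shared by all `μ(a_1,...,a_13)`;
`paramWeight i` belongs to `e_{i+1}`. They are natural numbers so that equations between them are
decidable. -/
def paramWeight : Fin 7 → ℕ := ![1, 1, 2, 3, 3, 4, 5]

theorem paramWeight_eq_add_add_iff {i j k l : Fin 7} (hij : i < j) (hjk : j < k) :
    paramWeight l = paramWeight i + paramWeight j + paramWeight k ↔
      (i, j, k, l) ∈ [(0, 1, 2, 5), (0, 1, 3, 6), (0, 1, 4, 6)] := by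
  revert i j k l
  decide

theorem isJacobi_iff_of_isDerivation_diagonal_paramWeight {μ : Law 7} (hμ : IsBilin μ)
    (hskew : IsSkew μ) (hd : IsDerivation μ (diagonal fun i => (paramWeight i : ℝ))) :
    IsJacobi μ ↔
      jacobiator μ (bVec 0) (bVec 1) (bVec 4) 6 = 0 ∧
      jacobiator μ (bVec 0) (bVec 1) (bVec 3) 6 = 0 ∧
      jacobiator μ (bVec 0) (bVec 1) (bVec 2) 5 = 0 := by
  refine ⟨fun h => ⟨congrFun (h _ _ _) 6, congrFun (h _ _ _) 6, congrFun (h _ _ _) 5⟩, ?_⟩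
  rintro ⟨h014, h013, h012⟩
  refine (isJacobi_iff_of_isDerivation_diagonal hμ hskew hd).mpr fun i j k l hij hjk hl => ?_
  have hmem := (paramWeight_eq_add_add_iff hij hjk).mp (mod_cast hl)
  simp only [List.mem_cons, Prod.mk.injEq, List.not_mem_nil, or_false] at hmem
  rcases hmem with ⟨rfl, rfl, rfl, rfl⟩ | ⟨rfl, rfl, rfl, rfl⟩ | ⟨rfl, rfl, rfl, rfl⟩
  exacts [h012, h013, h014]

variable {a1 a2 a3 a4 a5 a6 a7 a8 a9 a10 a11 a12 a13 : ℝ}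

local notation "cₐ" => cParam a1 a2 a3 a4 a5 a6 a7 a8 a9 a10 a11 a12 a13

theorem paramWeight_eq_add_of_cParam_ne_zero {i j k : Fin 7} (h : cₐ i j k ≠ 0) :
    paramWeight k = paramWeight i + paramWeight j := by
  contrapose! h
  fin_cases i <;> fin_cases j <;> fin_cases k <;> simp [cParam, paramWeight] at h ⊢

theorem isDerivation_mkLaw_cParam :
    IsDerivation (mkLaw cₐ) (diagonal fun i => (paramWeight i : ℝ)) :=
  isDerivation_mkLaw_diagonal fun _ _ _ h =>
    mod_cast paramWeight_eq_add_of_cParam_ne_zero h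

theorem jacobiator_mkLaw_cParam_zero_one_four :
    jacobiator (mkLaw cₐ) (bVec 0) (bVec 1) (bVec 4) 6 =
      -a10 * a6 + a5 * a11 + a1 * a13 := by
  rw [jacobiator_mkLaw_bVec_apply]
  simp only [cParam, Fin.isValue, and_self, ↓reduceIte, Pi.single_apply, one_ne_zero, zero_ne_one,
    Fin.reduceEq, and_false, Pi.zero_apply, sub_zero, and_true, false_and, ite_mul, zero_mul,
    true_and, zero_sub, mul_neg, neg_mul, Fin.sum_univ_seven, neg_zero, add_zero,
    zero_add, neg_neg]
  ring

theorem jacobiator_mkLaw_cParam_zero_one_three :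
    jacobiator (mkLaw cₐ) (bVec 0) (bVec 1) (bVec 3) 6 =
      -a9 * a6 + a4 * a11 + a1 * a12 := by
  rw [jacobiator_mkLaw_bVec_apply]
  simp only [cParam, Fin.isValue, and_self, ↓reduceIte, Pi.single_apply, one_ne_zero, zero_ne_one,
    Fin.reduceEq, and_false, Pi.zero_apply, sub_zero, and_true, false_and, ite_mul, zero_mul,
    true_and, zero_sub, mul_neg, neg_mul, Fin.sum_univ_seven, neg_zero, add_zero,
    zero_add, neg_neg]
  ring

theorem jacobiator_mkLaw_cParam_zero_one_two :
    jacobiator (mkLaw cₐ) (bVec 0) (bVec 1) (bVec 2) 5 =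
      -a8 * a5 + a3 * a10 - a7 * a4 + a2 * a9 := by
  rw [jacobiator_mkLaw_bVec_apply]
  simp only [cParam, Fin.isValue, and_self, ↓reduceIte, Pi.single_apply, one_ne_zero, zero_ne_one,
    Fin.reduceEq, and_false, Pi.zero_apply, sub_zero, and_true, false_and, true_and, ite_mul,
    zero_mul, Pi.add_apply, zero_sub, mul_neg, neg_add_rev, Fin.sum_univ_seven, add_zero, mul_zero,
    neg_zero, sub_self, zero_add, neg_mul, neg_neg]
  ring

end Parameters

/-- the Jacobi identity for `μ(a_1,...,a_13)` is equivalent to three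
polynomial equations in the parameters. -/
theorem stmt_3 (a1 a2 a3 a4 a5 a6 a7 a8 a9 a10 a11 a12 a13 : ℝ) :
    IsJacobi (mkLaw (cParam a1 a2 a3 a4 a5 a6 a7 a8 a9 a10 a11 a12 a13)) ↔
      (-a10 * a6 + a5 * a11 + a1 * a13 = 0 ∧
       -a9 * a6 + a4 * a11 + a1 * a12 = 0 ∧
       -a8 * a5 + a3 * a10 - a7 * a4 + a2 * a9 = 0) := by
  rw [isJacobi_iff_of_isDerivation_diagonal_paramWeight (isBilin_mkLaw _) (isSkew_mkLaw _)
      isDerivation_mkLaw_cParam,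
    jacobiator_mkLaw_cParam_zero_one_four, jacobiator_mkLaw_cParam_zero_one_three,
    jacobiator_mkLaw_cParam_zero_one_two]
end
end

section
/- Let μ be the Lie algebra law of g_{1.17} and let μ̃ be the law on ℝ⁷ with nonzero brackets [e_1,e_2] = (√611/94)e_3, [e_1,e_3] = (√235/47)e_5, [e_1,e_5] = (√611/94)e_6, [e_2,e_3] = (√235/94)e_4, [e_2,e_4] = (√611/94)e_6, [e_2,e_6] = (√705/94)e_7, [e_3,e_5] = −(√705/94)e_7. Let g : ℝ⁷ → ℝ⁷ be the linear map whose matrix in the canonical basis has rows (1,−1,0,0,0,0,0), (√2,√2,0,0,0,0,0), (0,0,√1222/47,0,0,0,0), (0,0,0,√65/47,√65/47,0,0), (0,0,0,√130/47,−√130/47,0,0), (0,0,0,0,0,13√470/2209,0), (0,0,0,0,0,0,65√3/2209). Then g is invertible and g μ(x,y) = μ̃(g x, g y) for all x, y ∈ ℝ⁷; that is, g·μ = μ̃, so the Lie algebras (ℝ⁷, μ) and (ℝ⁷, μ̃) are isomorphic. -/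
open Matrix BigOperators Polynomial

noncomputable section

/-- structure constants of the law `μ̃` from Example 1 (a nilsoliton law
isomorphic to `g_{1.17}`). -/
def cTilde : Fin 7 → Fin 7 → Fin 7 → ℝ := fun i j =>
  if i = 0 ∧ j = 1 then Pi.single 2 (Real.sqrt 611 / 94)
  else if i = 0 ∧ j = 2 then Pi.single 4 (Real.sqrt 235 / 47)
  else if i = 0 ∧ j = 4 then Pi.single 5 (Real.sqrt 611 / 94)
  else if i = 1 ∧ j = 2 then Pi.single 3 (Real.sqrt 235 / 94)
  else if i = 1 ∧ j = 3 then Pi.single 5 (Real.sqrt 611 / 94)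
  else if i = 1 ∧ j = 5 then Pi.single 6 (Real.sqrt 705 / 94)
  else if i = 2 ∧ j = 4 then Pi.single 6 (-(Real.sqrt 705 / 94))
  else 0

/-- the law `μ̃`. -/
def lawTilde : Law 7 := mkLaw cTilde


/-- structure constants of `g_{1.17}`. -/
def c117 : Fin 7 → Fin 7 → Fin 7 → ℝ := fun i j =>
  if i = 0 ∧ j = 1 then Pi.single 2 1
  else if i = 0 ∧ j = 2 then Pi.single 3 1
  else if i = 0 ∧ j = 3 then Pi.single 5 1
  else if i = 0 ∧ j = 5 then Pi.single 6 1
  else if i = 1 ∧ j = 2 then Pi.single 4 1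
  else if i = 1 ∧ j = 4 then Pi.single 5 1
  else if i = 1 ∧ j = 5 then Pi.single 6 1
  else if i = 2 ∧ j = 3 then Pi.single 6 (-1)
  else if i = 2 ∧ j = 4 then Pi.single 6 1
  else 0

/-- the Lie algebra law of `g_{1.17}`. -/
def law117 : Law 7 := mkLaw c117

/-- the explicit matrix `g` of Example 1. -/
def gIso : Matrix (Fin 7) (Fin 7) ℝ :=
  Matrix.of
    ![![1, -1, 0, 0, 0, 0, 0],
      ![Real.sqrt 2, Real.sqrt 2, 0, 0, 0, 0, 0],
      ![0, 0, Real.sqrt 1222 / 47, 0, 0, 0, 0],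
      ![0, 0, 0, Real.sqrt 65 / 47, Real.sqrt 65 / 47, 0, 0],
      ![0, 0, 0, Real.sqrt 130 / 47, -(Real.sqrt 130 / 47), 0, 0],
      ![0, 0, 0, 0, 0, 13 * Real.sqrt 470 / 2209, 0],
      ![0, 0, 0, 0, 0, 0, 65 * Real.sqrt 3 / 2209]]

/-! In the basis `(e₁ - e₂)/2, (e₁ + e₂)/2, e₃, (e₄ + e₅)/2, (e₄ - e₅)/2, e₆, e₇` the law of
`g_{1.17}` has rational structure constants and its brackets vanish exactly where those of `μ̃` do.
A diagonal rescaling then matches the seven remaining constants, and `g` is the product of these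
two changes of basis. -/

/-- The linear map with matrix `g` is a homomorphism from the law `μ` to the law `ν`; for
invertible `g` this is `g·μ = ν`. -/
def IsLawHom {m n : ℕ} (g : Matrix (Fin n) (Fin m) ℝ) (μ : Law m) (ν : Law n) : Prop :=
  ∀ x y, g *ᵥ μ x y = ν (g *ᵥ x) (g *ᵥ y)

theorem IsLawHom.mul {l m n : ℕ} {h : Matrix (Fin n) (Fin m) ℝ} {g : Matrix (Fin m) (Fin l) ℝ}
    {μ : Law l} {ν : Law m} {ρ : Law n} (hh : IsLawHom h ν ρ) (hg : IsLawHom g μ ν) :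
    IsLawHom (h * g) μ ρ := fun x y => by
  simp only [← mulVec_mulVec, hg x y, hh (g *ᵥ x) (g *ᵥ y)]

theorem isLawHom_diagonal_mkLaw {n : ℕ} {c c' : Fin n → Fin n → Fin n → ℝ} {d : Fin n → ℝ}
    (h : ∀ i j k, d k * c i j k = c' i j k * (d i * d j)) :
    IsLawHom (diagonal d) (mkLaw c) (mkLaw c') := by
  intro x y
  funext k
  simp only [mulVec_diagonal, mkLaw, Finset.mul_sum]
  refine Finset.sum_congr rfl fun i _ => Finset.sum_congr rfl fun j _ => ?_
  linear_combination x i * y j * (h i j k - h j i k)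

/-- Structure constants with the same nonzero brackets as `cTilde`, whose seven coefficients
`a 0, …, a 6` are listed in the order of the clauses of `cTilde`. -/
def cTildePattern (a : Fin 7 → ℝ) : Fin 7 → Fin 7 → Fin 7 → ℝ := fun i j =>
  if i = 0 ∧ j = 1 then Pi.single 2 (a 0)
  else if i = 0 ∧ j = 2 then Pi.single 4 (a 1)
  else if i = 0 ∧ j = 4 then Pi.single 5 (a 2)
  else if i = 1 ∧ j = 2 then Pi.single 3 (a 3)
  else if i = 1 ∧ j = 3 then Pi.single 5 (a 4)
  else if i = 1 ∧ j = 5 then Pi.single 6 (a 5)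
  else if i = 2 ∧ j = 4 then Pi.single 6 (a 6)
  else 0

theorem lawTilde_eq_mkLaw_cTildePattern :
    lawTilde = mkLaw (cTildePattern
      ![√611 / 94, √235 / 47, √611 / 94, √235 / 94, √611 / 94, √705 / 94, -(√705 / 94)]) :=
  rfl

theorem mkLaw_cTildePattern_apply (a x y : Fin 7 → ℝ) :
    mkLaw (cTildePattern a) x y =
      ![0, 0,
        a 0 * (x 0 * y 1 - x 1 * y 0),
        a 3 * (x 1 * y 2 - x 2 * y 1),
        a 1 * (x 0 * y 2 - x 2 * y 0),
        a 2 * (x 0 * y 4 - x 4 * y 0) + a 4 * (x 1 * y 3 - x 3 * y 1),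
        a 5 * (x 1 * y 5 - x 5 * y 1) + a 6 * (x 2 * y 4 - x 4 * y 2)] := by
  funext k
  fin_cases k <;> simp [mkLaw, cTildePattern, Fin.sum_univ_seven] <;> ring

theorem law117_apply (x y : Fin 7 → ℝ) :
    law117 x y =
      ![0, 0,
        x 0 * y 1 - x 1 * y 0,
        x 0 * y 2 - x 2 * y 0,
        x 1 * y 2 - x 2 * y 1,
        (x 0 * y 3 - x 3 * y 0) + (x 1 * y 4 - x 4 * y 1),
        (x 0 * y 5 - x 5 * y 0) + (x 1 * y 5 - x 5 * y 1)
          - (x 2 * y 3 - x 3 * y 2) + (x 2 * y 4 - x 4 * y 2)] := by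
  funext k
  fin_cases k <;> simp [law117, mkLaw, c117, Fin.sum_univ_seven] <;> ring

theorem isLawHom_diagonal_cTildePattern {a b d : Fin 7 → ℝ}
    (h₀ : d 2 * a 0 = b 0 * (d 0 * d 1)) (h₁ : d 4 * a 1 = b 1 * (d 0 * d 2))
    (h₂ : d 5 * a 2 = b 2 * (d 0 * d 4)) (h₃ : d 3 * a 3 = b 3 * (d 1 * d 2))
    (h₄ : d 5 * a 4 = b 4 * (d 1 * d 3)) (h₅ : d 6 * a 5 = b 5 * (d 1 * d 5))
    (h₆ : d 6 * a 6 = b 6 * (d 2 * d 4)) :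
    IsLawHom (diagonal d) (mkLaw (cTildePattern a)) (mkLaw (cTildePattern b)) := by
  refine isLawHom_diagonal_mkLaw fun i j k => ?_
  simp only [cTildePattern]
  split_ifs <;> simp only [Pi.single_apply, Pi.zero_apply, mul_zero, zero_mul] <;>
    split_ifs <;> simp_all

/-- The rational factor of `gIso`: it replaces the coordinate pairs `(x₁, x₂)` and `(x₄, x₅)` by
differences and sums. -/
def sumDiffMatrix : Matrix (Fin 7) (Fin 7) ℝ :=
  Matrix.of
    ![![1, -1, 0, 0, 0, 0, 0],
      ![1, 1, 0, 0, 0, 0, 0],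
      ![0, 0, 1, 0, 0, 0, 0],
      ![0, 0, 0, 1, 1, 0, 0],
      ![0, 0, 0, 1, -1, 0, 0],
      ![0, 0, 0, 0, 0, 1, 0],
      ![0, 0, 0, 0, 0, 0, 1]]

theorem sumDiffMatrix_mulVec (x : Fin 7 → ℝ) :
    sumDiffMatrix *ᵥ x = ![x 0 - x 1, x 0 + x 1, x 2, x 3 + x 4, x 3 - x 4, x 5, x 6] := by
  funext k
  fin_cases k <;> simp [sumDiffMatrix, mulVec, dotProduct, Fin.sum_univ_seven, sub_eq_add_neg]

theorem sumDiffMatrix_mul_transpose :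
    sumDiffMatrix * sumDiffMatrixᵀ = diagonal ![2, 2, 1, 2, 2, 1, 1] := by
  ext i j
  fin_cases i <;> fin_cases j <;> norm_num [sumDiffMatrix, mul_apply, Fin.sum_univ_succ]

theorem isUnit_sumDiffMatrix : IsUnit sumDiffMatrix := by
  refine isUnit_of_mul_isUnit_left (y := sumDiffMatrixᵀ) ?_
  rw [sumDiffMatrix_mul_transpose, isUnit_diagonal, Pi.isUnit_iff]
  intro i
  fin_cases i <;> simp

/-- The law of `g_{1.17}` transported along `sumDiffMatrix`. -/
def lawSumDiff : Law 7 := mkLaw (cTildePattern ![1 / 2, 1, 1 / 2, 1, 1 / 2, 1, -1])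

theorem isLawHom_sumDiffMatrix : IsLawHom sumDiffMatrix law117 lawSumDiff := by
  intro x y
  simp only [lawSumDiff, sumDiffMatrix_mulVec, law117_apply, mkLaw_cTildePattern_apply]
  funext k
  fin_cases k <;> simp <;> ring

/-- The diagonal factor of `gIso`, which rescales the structure constants of `lawSumDiff` to those
of `lawTilde`. -/
def isoScaling : Fin 7 → ℝ :=
  ![1, √2, √1222 / 47, √65 / 47, √130 / 47, 13 * √470 / 2209, 65 * √3 / 2209]

theorem gIso_eq_diagonal_mul : gIso = diagonal isoScaling * sumDiffMatrix := by
  ext i j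
  fin_cases i <;> fin_cases j <;> simp [gIso, isoScaling, sumDiffMatrix, diagonal_mul]

theorem isUnit_diagonal_isoScaling : IsUnit (diagonal isoScaling) := by
  rw [isUnit_diagonal, Pi.isUnit_iff]
  intro i
  fin_cases i <;> simp [isoScaling]

theorem isLawHom_diagonal_isoScaling :
    IsLawHom (diagonal isoScaling) lawSumDiff lawTilde := by
  have sqrt_611 : √611 = √13 * √47 := by rw [← Real.sqrt_mul] <;> norm_num
  have sqrt_235 : √235 = √5 * √47 := by rw [← Real.sqrt_mul] <;> norm_num
  have sqrt_705 : √705 = √3 * (√5 * √47) := by rw [← Real.sqrt_mul, ← Real.sqrt_mul] <;> norm_num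
  have sqrt_1222 : √1222 = √2 * (√13 * √47) := by
    rw [← Real.sqrt_mul, ← Real.sqrt_mul] <;> norm_num
  have sqrt_65 : √65 = √5 * √13 := by rw [← Real.sqrt_mul] <;> norm_num
  have sqrt_130 : √130 = √2 * (√5 * √13) := by rw [← Real.sqrt_mul, ← Real.sqrt_mul] <;> norm_num
  have sqrt_470 : √470 = √2 * (√5 * √47) := by rw [← Real.sqrt_mul, ← Real.sqrt_mul] <;> norm_num
  have sq_2 : √2 ^ 2 = 2 := Real.sq_sqrt (by norm_num)
  have sq_5 : √5 ^ 2 = 5 := Real.sq_sqrt (by norm_num)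
  have sq_13 : √13 ^ 2 = 13 := Real.sq_sqrt (by norm_num)
  have sq_47 : √47 ^ 2 = 47 := Real.sq_sqrt (by norm_num)
  rw [lawTilde_eq_mkLaw_cTildePattern, lawSumDiff]
  -- In terms of `√p` for `p` prime, each of the seven rescaling conditions is a polynomial
  -- identity modulo the relations `(√p) ^ 2 = p`.
  apply isLawHom_diagonal_cTildePattern <;>
    simp only [isoScaling, cons_val, sqrt_611, sqrt_235, sqrt_705, sqrt_1222, sqrt_65, sqrt_130,
      sqrt_470] <;>
    grind

/-- `g` is invertible and `g·μ = μ̃`, so `(ℝ⁷, μ)` and `(ℝ⁷, μ̃)`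
are isomorphic Lie algebras. -/
theorem stmt_5 :
    IsUnit gIso ∧
    (∀ x y : Fin 7 → ℝ,
      gIso.mulVec (law117 x y) = lawTilde (gIso.mulVec x) (gIso.mulVec y)) := by
  rw [gIso_eq_diagonal_mul]
  exact ⟨isUnit_diagonal_isoScaling.mul isUnit_sumDiffMatrix,
    isLawHom_diagonal_isoScaling.mul isLawHom_sumDiffMatrix⟩
end
end

section
/- For every λ ∈ ℝ with λ ≠ 0, the 7-dimensional nilpotent Lie algebra g_{1.3(i_λ)} is an Einstein nilradical. -/
open Matrix BigOperators Polynomial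

noncomputable section

/-- structure constants of `g_{1.3(i_λ)}`. -/
def c13 (lam : ℝ) : Fin 7 → Fin 7 → Fin 7 → ℝ := fun i j =>
  if i = 0 ∧ j = 1 then Pi.single 3 1
  else if i = 0 ∧ j = 2 then Pi.single 4 1
  else if i = 0 ∧ j = 3 then Pi.single 5 1
  else if i = 0 ∧ j = 5 then Pi.single 6 1
  else if i = 1 ∧ j = 2 then Pi.single 5 1
  else if i = 1 ∧ j = 3 then Pi.single 6 lam
  else if i = 1 ∧ j = 4 then Pi.single 6 1
  else if i = 2 ∧ j = 4 then Pi.single 6 1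
  else 0

/-- the Lie algebra law of `g_{1.3(i_λ)}`. -/
def law13 (lam : ℝ) : Law 7 := mkLaw (c13 lam)

/-!
The algebra `g_{1.3(i_λ)}` is graded by `V₁ ⊕ ⋯ ⊕ V₅` of dimensions `1, 2, 2, 1, 1`, and a graded
law consists of maps `A : V₂ → V₃`, `u : V₃ → V₄`, `t : V₄ → V₅` (the action of `V₁`), an area form
`s` on `V₂` with values in `V₄`, and a pairing `B : V₂ × V₃ → V₅`. The moment map of such a law is
block diagonal. Normalizing `u = (2, 0)`, it equals `-34 + 10 · (grading)` as soon as
`B = adj(A) R` with `R` orthogonal, `t² = s² + 1`, and the Gram matrix `N = A Aᵀ` satisfies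
`N + Rᵀ N R = diag(10 - t², 6 - t²)`.

Such a law lies in the orbit of `g_{1.3(i_λ)}` when the form `B A` on `V₂` has skew part `s t` (the
Jacobi identity) and determinant `λ (s t)²`. Since `det (B A) = det N · det R`, the sign of `λ` is
`det R`: a reflection settles `λ < 0`, a rotation settles `λ > 0`, and in each case `T = t²` is
found in `(1, 4)` by the intermediate value theorem.
-/

/-- A law for which the canonical inner product is a nilsoliton: its moment map is a negative
multiple of the identity plus a symmetric derivation. -/
def IsNilsoliton {n : ℕ} (μ : Law n) : Prop :=
  ∃ c : ℝ, ∃ φ : Matrix (Fin n) (Fin n) ℝ,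
    c < 0 ∧ φ.IsSymm ∧ IsDerivation μ φ ∧ momentMap μ = c • (1 : Matrix (Fin n) (Fin n) ℝ) + φ

theorem exists_act_eq_of_isUnit {n : ℕ} {μ ν : Law n} {M : Matrix (Fin n) (Fin n) ℝ}
    (hM : IsUnit M) (hμν : ∀ X Y, M *ᵥ μ X Y = ν (M *ᵥ X) (M *ᵥ Y)) :
    ∃ g : GL (Fin n) ℝ, act g μ = ν := by
  obtain ⟨g, rfl⟩ := hM
  have mulVec_inv (X : Fin n → ℝ) : g.val *ᵥ (g⁻¹.val *ᵥ X) = X := by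
    rw [mulVec_mulVec, ← Units.val_mul, mul_inv_cancel, Units.val_one, one_mulVec]
  refine ⟨g, ?_⟩
  funext X Y
  rw [act, hμν, mulVec_inv, mulVec_inv]

theorem IsNilsoliton.isEinsteinNilradical_of_isUnit {n : ℕ} {μ ν : Law n}
    {M : Matrix (Fin n) (Fin n) ℝ} (hν : IsNilsoliton ν) (hM : IsUnit M)
    (hμν : ∀ X Y, M *ᵥ μ X Y = ν (M *ᵥ X) (M *ᵥ Y)) : IsEinsteinNilradical μ := by
  obtain ⟨g, rfl⟩ := exists_act_eq_of_isUnit hM hμν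
  exact ⟨g, hν⟩

/-- The Gram matrix of the operators `ad e_k` for the Hilbert–Schmidt inner product. -/
def inputGram {n : ℕ} (μ : Law n) : Matrix (Fin n) (Fin n) ℝ :=
  of fun k l => ∑ i, μ (bVec k) (bVec i) ⬝ᵥ μ (bVec l) (bVec i)

/-- The Gram matrix of the coordinate forms `(X, Y) ↦ ⟨μ(X, Y), e_k⟩`. -/
def outputGram {n : ℕ} (μ : Law n) : Matrix (Fin n) (Fin n) ℝ :=
  of fun k l => ∑ i, ∑ j, μ (bVec i) (bVec j) k * μ (bVec i) (bVec j) l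

theorem momentMap_eq_outputGram_sub {n : ℕ} (μ : Law n) :
    momentMap μ = outputGram μ - (2 : ℝ) • inputGram μ := by
  ext k l
  simp only [momentMap, outputGram, inputGram, of_apply, Matrix.sub_apply, Matrix.smul_apply,
    smul_eq_mul, dotProduct]
  ring

section TwoByTwo

theorem isSymm_fin_two_of {α : Type*} (x y z : α) : (!![x, y; y, z]).IsSymm := by
  ext i j
  fin_cases i <;> fin_cases j <;> rfl

variable {K : Type*} [CommRing K]

theorem add_adjugate_fin_two (M : Matrix (Fin 2) (Fin 2) K) : M + M.adjugate = M.trace • 1 := by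
  ext i j
  fin_cases i <;> fin_cases j <;> simp [adjugate_fin_two, trace_fin_two, add_comm]

theorem transpose_mul_self_add_adjugate_mul_transpose (A : Matrix (Fin 2) (Fin 2) K) :
    Aᵀ * A + A.adjugate * A.adjugateᵀ = (A * Aᵀ).trace • 1 := by
  rw [adjugate_transpose, ← adjugate_mul_distrib, add_adjugate_fin_two, trace_mul_comm]

theorem mul_transpose_add_transpose_adjugate_mul (A : Matrix (Fin 2) (Fin 2) K) :
    A * Aᵀ + A.adjugateᵀ * A.adjugate = (A * Aᵀ).trace • 1 := by
  rw [adjugate_transpose, ← adjugate_mul_distrib, add_adjugate_fin_two]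

theorem adjugate_mul_mul_sub_fin_two (A R : Matrix (Fin 2) (Fin 2) K) :
    (A.adjugate * R * A) 0 1 - (A.adjugate * R * A) 1 0 =
      (R * (A * Aᵀ)) 0 1 - (R * (A * Aᵀ)) 1 0 := by
  simp only [adjugate_fin_two, mul_apply, Fin.sum_univ_two, transpose_apply, of_apply, cons_val]
  ring

/-- The change of basis bringing the bilinear form `M` on `K²` to the normal form of
`transpose_flagNormalizer_mul_mul` while preserving the line spanned by the second basis vector. -/
def flagNormalizer (M : Matrix (Fin 2) (Fin 2) K) : Matrix (Fin 2) (Fin 2) K :=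
  !![M 1 1, 0; -M 1 0, M 0 1 - M 1 0]

theorem det_flagNormalizer (M : Matrix (Fin 2) (Fin 2) K) :
    (flagNormalizer M).det = M 1 1 * (M 0 1 - M 1 0) := by
  simp [flagNormalizer, det_fin_two]

theorem transpose_flagNormalizer_mul_mul (M : Matrix (Fin 2) (Fin 2) K) :
    (flagNormalizer M)ᵀ * M * flagNormalizer M =
      M 1 1 • !![M.det, (M 0 1 - M 1 0) ^ 2; 0, (M 0 1 - M 1 0) ^ 2] := by
  ext i j
  fin_cases i <;> fin_cases j <;>
    simp [flagNormalizer, mul_apply, Fin.sum_univ_two, det_fin_two] <;> ring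

theorem reflection_conj_add (x y z : K) :
    !![x, y; y, z] + (!![1, 0; 0, -1])ᵀ * !![x, y; y, z] * !![1, 0; 0, -1] =
      !![2 * x, 0; 0, 2 * z] := by
  ext i j
  fin_cases i <;> fin_cases j <;> simp [mul_apply, two_mul]

theorem rotation_conj_add {x y c σ : K} (hc : c ^ 2 + σ ^ 2 = 1) (hy : c * y = -σ) :
    !![x + 1, y; y, x - 1] + (!![c, σ; -σ, c])ᵀ * !![x + 1, y; y, x - 1] * !![c, σ; -σ, c] =
      !![2 * (x + 1), 0; 0, 2 * (x - 1)] := by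
  ext i j
  fin_cases i <;> fin_cases j <;>
    simp only [Fin.zero_eta, Fin.mk_one, Matrix.add_apply, mul_apply, Fin.sum_univ_two,
      transpose_apply, of_apply, cons_val]
  · linear_combination (x + 1) * hc - 2 * σ * hy
  · linear_combination -y * hc + 2 * c * hy
  · linear_combination -y * hc + 2 * c * hy
  · linear_combination (x - 1) * hc + 2 * σ * hy

end TwoByTwo

theorem exists_lowerTriangular_mul_transpose_eq {N : Matrix (Fin 2) (Fin 2) ℝ} (hN : N.IsSymm)
    (h00 : 0 < N 0 0) (hdet : 0 < N.det) :
    ∃ A : Matrix (Fin 2) (Fin 2) ℝ, A 0 1 = 0 ∧ A * Aᵀ = N := by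
  have h10 : N 1 0 = N 0 1 := hN.apply 0 1
  rw [det_fin_two, h10] at hdet
  have hsqrt : √(N 0 0) ≠ 0 := (Real.sqrt_pos.2 h00).ne'
  have hschur : 0 ≤ N 1 1 - N 0 1 ^ 2 / N 0 0 := by
    rw [sub_nonneg, div_le_iff₀ h00]
    linarith
  refine ⟨!![√(N 0 0), 0; N 0 1 / √(N 0 0), √(N 1 1 - N 0 1 ^ 2 / N 0 0)], rfl, ?_⟩
  ext i j
  fin_cases i <;> fin_cases j
  · simp [mul_apply, Real.mul_self_sqrt h00.le]
  · simp [mul_apply, mul_div_cancel₀, hsqrt]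
  · simp [mul_apply, hsqrt, h10]
  · simp [mul_apply, ← sq, div_pow, Real.sq_sqrt h00.le, Real.sq_sqrt hschur]

theorem exists_mul_eq_of_sq_eq_mul_sub_one {T k : ℝ} (hT : 1 < T) (hk : k ^ 2 = T * (T - 1)) :
    ∃ s t : ℝ, s ≠ 0 ∧ t ≠ 0 ∧ t ^ 2 = s ^ 2 + 1 ∧ t ^ 2 = T ∧ s * t = k := by
  have hT0 : 0 < T := by linarith
  have hsq : √T ^ 2 = T := Real.sq_sqrt hT0.le
  have ht : √T ≠ 0 := (Real.sqrt_pos.2 hT0).ne'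
  have hs : (k / √T) ^ 2 = T - 1 := by
    rw [div_pow, hsq, hk, mul_div_cancel_left₀ _ hT0.ne']
  refine ⟨k / √T, √T, ?_, ht, by rw [hs, hsq]; ring, hsq, div_mul_cancel₀ _ ht⟩
  rw [← pow_ne_zero_iff two_ne_zero, hs]
  exact (sub_pos.2 hT).ne'

/-- The block diagonal endomorphism of `V₁ ⊕ ⋯ ⊕ V₅` acting by `a` on `V₁ = ⟨e₁⟩`, by `P` on
`V₂ = ⟨e₂, e₃⟩`, by `Q` on `V₃ = ⟨e₄, e₅⟩`, by `z` on `V₄ = ⟨e₆⟩` and by `w` on `V₅ = ⟨e₇⟩`. -/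
def gradedMap (a : ℝ) (P Q : Matrix (Fin 2) (Fin 2) ℝ) (z w : ℝ) : Matrix (Fin 7) (Fin 7) ℝ :=
  !![a, 0, 0, 0, 0, 0, 0;
     0, P 0 0, P 0 1, 0, 0, 0, 0;
     0, P 1 0, P 1 1, 0, 0, 0, 0;
     0, 0, 0, Q 0 0, Q 0 1, 0, 0;
     0, 0, 0, Q 1 0, Q 1 1, 0, 0;
     0, 0, 0, 0, 0, z, 0;
     0, 0, 0, 0, 0, 0, w]

/-- The derivation acting by `i` on `Vᵢ`. -/
def grading : Matrix (Fin 7) (Fin 7) ℝ := diagonal ![1, 2, 2, 3, 3, 4, 5]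

/-- The general bracket on `ℝ⁷` compatible with the grading `V₁ ⊕ ⋯ ⊕ V₅`: the matrices of `ad e₁`
are `A` on `V₂`, the row `u` on `V₃` and `t` on `V₄`, while `[e₂, e₃] = s e₆` and `B` is the matrix
of `V₂ × V₃ → V₅`. The Jacobi identity is not imposed. -/
def gradedLaw (A B : Matrix (Fin 2) (Fin 2) ℝ) (u : Fin 2 → ℝ) (s t : ℝ) : Law 7 := fun X Y =>
  let ω i j := X i * Y j - X j * Y i
  ![0, 0, 0,
    A 0 0 * ω 0 1 + A 0 1 * ω 0 2,
    A 1 0 * ω 0 1 + A 1 1 * ω 0 2,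
    u 0 * ω 0 3 + u 1 * ω 0 4 + s * ω 1 2,
    t * ω 0 5 + B 0 0 * ω 1 3 + B 0 1 * ω 1 4 + B 1 0 * ω 2 3 + B 1 1 * ω 2 4]

section Graded

variable {a z w s t s' t' : ℝ} {u u' : Fin 2 → ℝ} {P Q A B A' B' : Matrix (Fin 2) (Fin 2) ℝ}

theorem gradedMap_mulVec (X : Fin 7 → ℝ) :
    gradedMap a P Q z w *ᵥ X =
      ![a * X 0, P 0 0 * X 1 + P 0 1 * X 2, P 1 0 * X 1 + P 1 1 * X 2,
        Q 0 0 * X 3 + Q 0 1 * X 4, Q 1 0 * X 3 + Q 1 1 * X 4, z * X 5, w * X 6] := by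
  funext k
  fin_cases k <;> simp [gradedMap, mulVec, dotProduct, Fin.sum_univ_seven]

theorem gradedMap_one : gradedMap 1 1 1 1 1 = 1 := by
  ext i j
  fin_cases i <;> fin_cases j <;> simp [gradedMap]

theorem gradedMap_sub_gradedMap (a a' : ℝ) (P P' Q Q' : Matrix (Fin 2) (Fin 2) ℝ)
    (z z' w w' : ℝ) :
    gradedMap a P Q z w - gradedMap a' P' Q' z' w' =
      gradedMap (a - a') (P - P') (Q - Q') (z - z') (w - w') := by
  ext i j
  fin_cases i <;> fin_cases j <;> simp [gradedMap]

theorem smul_gradedMap (x a : ℝ) (P Q : Matrix (Fin 2) (Fin 2) ℝ) (z w : ℝ) :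
    x • gradedMap a P Q z w = gradedMap (x * a) (x • P) (x • Q) (x * z) (x * w) := by
  ext i j
  fin_cases i <;> fin_cases j <;> simp [gradedMap]

theorem gradedMap_mul_gradedMap (a a' : ℝ) (P P' Q Q' : Matrix (Fin 2) (Fin 2) ℝ)
    (z z' w w' : ℝ) :
    gradedMap a P Q z w * gradedMap a' P' Q' z' w' =
      gradedMap (a * a') (P * P') (Q * Q') (z * z') (w * w') := by
  ext i j
  fin_cases i <;> fin_cases j <;>
    simp [gradedMap, mul_apply, Fin.sum_univ_seven, Fin.sum_univ_two]

theorem isUnit_gradedMap (ha : a ≠ 0) (hP : IsUnit P) (hQ : IsUnit Q) (hz : z ≠ 0) (hw : w ≠ 0) :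
    IsUnit (gradedMap a P Q z w) := by
  rw [isUnit_iff_isUnit_det] at hP hQ
  refine .of_mul_eq_one (gradedMap a⁻¹ P⁻¹ Q⁻¹ z⁻¹ w⁻¹) ?_
  rw [gradedMap_mul_gradedMap, mul_inv_cancel₀ ha, mul_nonsing_inv P hP, mul_nonsing_inv Q hQ,
    mul_inv_cancel₀ hz, mul_inv_cancel₀ hw, gradedMap_one]

theorem gradedMap_mulVec_gradedLaw (hA : Q * A = a • (A' * P)) (hu : z • u = a • (u' ᵥ* Q))
    (hs : z * s = s' * P.det) (ht : w * t = a * z * t') (hB : w • B = Pᵀ * B' * Q)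
    (X Y : Fin 7 → ℝ) :
    gradedMap a P Q z w *ᵥ gradedLaw A B u s t X Y =
      gradedLaw A' B' u' s' t' (gradedMap a P Q z w *ᵥ X) (gradedMap a P Q z w *ᵥ Y) := by
  simp only [← Matrix.ext_iff, Fin.forall_fin_two, funext_iff, mul_apply, vecMul, dotProduct,
    Fin.sum_univ_two, Matrix.smul_apply, Pi.smul_apply, smul_eq_mul, transpose_apply] at hA hu hB
  obtain ⟨⟨hA00, hA01⟩, hA10, hA11⟩ := hA
  obtain ⟨hu0, hu1⟩ := hu
  obtain ⟨⟨hB00, hB01⟩, hB10, hB11⟩ := hB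
  rw [det_fin_two] at hs
  simp only [gradedMap_mulVec]
  funext k
  fin_cases k
  any_goals simp only [gradedLaw, Fin.zero_eta, Fin.mk_one, Fin.reduceFinMk, cons_val, mul_zero,
    add_zero]
  · linear_combination (X 0 * Y 1 - X 1 * Y 0) * hA00 + (X 0 * Y 2 - X 2 * Y 0) * hA01
  · linear_combination (X 0 * Y 1 - X 1 * Y 0) * hA10 + (X 0 * Y 2 - X 2 * Y 0) * hA11
  · linear_combination (X 0 * Y 3 - X 3 * Y 0) * hu0 + (X 0 * Y 4 - X 4 * Y 0) * hu1
      + (X 1 * Y 2 - X 2 * Y 1) * hs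
  · linear_combination (X 0 * Y 5 - X 5 * Y 0) * ht
      + (X 1 * Y 3 - X 3 * Y 1) * hB00 + (X 1 * Y 4 - X 4 * Y 1) * hB01
      + (X 2 * Y 3 - X 3 * Y 2) * hB10 + (X 2 * Y 4 - X 4 * Y 2) * hB11

theorem isDerivation_smul_grading (x : ℝ) :
    IsDerivation (gradedLaw A B u s t) (x • grading) := by
  intro X Y
  funext k
  fin_cases k <;> simp [gradedLaw, grading, smul_mulVec, mulVec_diagonal] <;> ring

theorem smul_one_add_smul_grading (c x : ℝ) :
    c • (1 : Matrix (Fin 7) (Fin 7) ℝ) + x • grading =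
      gradedMap (c + x) ((c + 2 * x) • 1) ((c + 3 * x) • 1) (c + 4 * x) (c + 5 * x) := by
  ext i j
  fin_cases i <;> fin_cases j <;> simp [gradedMap, grading, one_apply, mul_comm x]

theorem gradedLaw_bVec_bVec (i j : Fin 7) :
    gradedLaw A B u s t (bVec i) (bVec j) = (![
      ![0, ![0, 0, 0, A 0 0, A 1 0, 0, 0], ![0, 0, 0, A 0 1, A 1 1, 0, 0],
        ![0, 0, 0, 0, 0, u 0, 0], ![0, 0, 0, 0, 0, u 1, 0], ![0, 0, 0, 0, 0, 0, t], 0],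
      ![![0, 0, 0, -A 0 0, -A 1 0, 0, 0], 0, ![0, 0, 0, 0, 0, s, 0],
        ![0, 0, 0, 0, 0, 0, B 0 0], ![0, 0, 0, 0, 0, 0, B 0 1], 0, 0],
      ![![0, 0, 0, -A 0 1, -A 1 1, 0, 0], ![0, 0, 0, 0, 0, -s, 0], 0,
        ![0, 0, 0, 0, 0, 0, B 1 0], ![0, 0, 0, 0, 0, 0, B 1 1], 0, 0],
      ![![0, 0, 0, 0, 0, -u 0, 0], ![0, 0, 0, 0, 0, 0, -B 0 0], ![0, 0, 0, 0, 0, 0, -B 1 0],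
        0, 0, 0, 0],
      ![![0, 0, 0, 0, 0, -u 1, 0], ![0, 0, 0, 0, 0, 0, -B 0 1], ![0, 0, 0, 0, 0, 0, -B 1 1],
        0, 0, 0, 0],
      ![![0, 0, 0, 0, 0, 0, -t], 0, 0, 0, 0, 0, 0],
      0] : Fin 7 → Fin 7 → Fin 7 → ℝ) i j := by
  fin_cases i <;> fin_cases j <;> simp [gradedLaw, bVec]

theorem inputGram_gradedLaw :
    inputGram (gradedLaw A B u s t) =
      gradedMap ((A * Aᵀ).trace + u ⬝ᵥ u + t ^ 2) (Aᵀ * A + B * Bᵀ + s ^ 2 • 1)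
        (Bᵀ * B + vecMulVec u u) (t ^ 2) 0 := by
  ext k l
  rw [inputGram, of_apply]
  fin_cases k <;> fin_cases l <;>
    simp [gradedMap, gradedLaw_bVec_bVec, Fin.sum_univ_seven, Fin.sum_univ_two, mul_apply,
      trace_fin_two, vec2_dotProduct, vecMulVec_apply] <;> ring

theorem outputGram_gradedLaw :
    outputGram (gradedLaw A B u s t) =
      gradedMap 0 0 ((2 : ℝ) • (A * Aᵀ)) (2 * (u ⬝ᵥ u + s ^ 2))
        (2 * ((B * Bᵀ).trace + t ^ 2)) := by
  ext k l
  rw [outputGram, of_apply]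
  fin_cases k <;> fin_cases l <;>
    simp [gradedMap, gradedLaw_bVec_bVec, Fin.sum_univ_seven, Fin.sum_univ_two, mul_apply,
      trace_fin_two, vec2_dotProduct] <;> ring

theorem momentMap_gradedLaw :
    momentMap (gradedLaw A B u s t) =
      gradedMap (-2 * ((A * Aᵀ).trace + u ⬝ᵥ u + t ^ 2))
        (-(2 : ℝ) • (Aᵀ * A + B * Bᵀ + s ^ 2 • 1))
        ((2 : ℝ) • (A * Aᵀ - Bᵀ * B - vecMulVec u u))
        (2 * (u ⬝ᵥ u + s ^ 2 - t ^ 2)) (2 * ((B * Bᵀ).trace + t ^ 2)) := by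
  rw [momentMap_eq_outputGram_sub, inputGram_gradedLaw, outputGram_gradedLaw, smul_gradedMap,
    gradedMap_sub_gradedMap]
  congr 1
  · ring
  · rw [zero_sub, neg_smul]
  · rw [← smul_sub, sub_sub]
  · ring
  · ring

-- With these normalizations the moment map is `diag(-24, -14, -14, -4, -4, 6, 16)`.
theorem isNilsoliton_gradedLaw (hst : t ^ 2 = s ^ 2 + 1) (hAA : (A * Aᵀ).trace = 8 - t ^ 2)
    (hBB : (B * Bᵀ).trace = 8 - t ^ 2) (hV₂ : Aᵀ * A + B * Bᵀ = (8 - t ^ 2) • 1)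
    (hV₃ : A * Aᵀ - Bᵀ * B = !![2, 0; 0, -2]) :
    IsNilsoliton (gradedLaw A B ![2, 0] s t) := by
  refine ⟨-34, (10 : ℝ) • grading, by norm_num, (isSymm_diagonal _).smul _,
    isDerivation_smul_grading 10, ?_⟩
  have hu : vecMulVec (![2, 0] : Fin 2 → ℝ) ![2, 0] = !![4, 0; 0, 0] := by
    ext i j
    fin_cases i <;> fin_cases j <;> simp [vecMulVec_apply]
    norm_num
  have hu' : (![2, 0] : Fin 2 → ℝ) ⬝ᵥ ![2, 0] = 4 := by norm_num [dotProduct]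
  rw [momentMap_gradedLaw, smul_one_add_smul_grading, hAA, hBB, hV₂, hV₃, hu, hu']
  congr 1
  · ring
  · rw [← add_smul, smul_smul]
    congr 1
    linear_combination 2 * hst
  · ext i j
    fin_cases i <;> fin_cases j <;> norm_num
  · linear_combination -2 * hst
  · ring

end Graded

section Law13

variable {lam s t k T : ℝ} {A B R N : Matrix (Fin 2) (Fin 2) ℝ}

theorem law13_eq_gradedLaw (lam : ℝ) : law13 lam = gradedLaw 1 !![lam, 1; 0, 1] ![1, 0] 1 1 := by
  funext X Y k
  fin_cases k <;> simp [law13, mkLaw, c13, gradedLaw, Fin.sum_univ_seven] <;> ring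

theorem isEinsteinNilradical_law13_of_gradedLaw {u : Fin 2 → ℝ} {α : ℝ}
    (hsol : IsNilsoliton (gradedLaw A B u s t)) (hA : IsUnit A) (hs : s ≠ 0) (ht : t ≠ 0)
    (hu : u ᵥ* A = ![α, 0]) (hα : α ≠ 0) (hjac : (B * A) 0 1 - (B * A) 1 0 = s * t)
    (h11 : (B * A) 1 1 ≠ 0) (hdet : (B * A).det = lam * (s * t) ^ 2) :
    IsEinsteinNilradical (law13 lam) := by
  -- The scale `x` is forced by the compatibility of `u` and `s` on `V₄`.
  obtain ⟨x, hx⟩ : ∃ x : ℝ, x * (s * t * s) = α := ⟨α / (s * t * s), by field_simp⟩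
  have hx0 : x ≠ 0 := by rintro rfl; simp_all
  set P := x • flagNormalizer (B * A) with hP
  set z := x ^ 2 * (B * A) 1 1 * (s * t) * s with hz
  have hPdet : P.det = x ^ 2 * ((B * A) 1 1 * (s * t)) := by
    rw [hP, det_smul, det_flagNormalizer, hjac, Fintype.card_fin]
  have hPunit : IsUnit P := by
    rw [isUnit_iff_isUnit_det, hPdet, isUnit_iff_ne_zero]
    positivity
  have hz0 : z ≠ 0 := by positivity
  refine hsol.isEinsteinNilradical_of_isUnit
    (isUnit_gradedMap one_ne_zero hPunit (hA.mul hPunit) hz0 (mul_ne_zero hz0 ht)) ?_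
  rw [law13_eq_gradedLaw]
  apply gradedMap_mulVec_gradedLaw
  · rw [mul_one, one_smul]
  · rw [← vecMul_vecMul, hu, one_smul]
    funext i
    fin_cases i
    · simp only [hP, hz, flagNormalizer, Fin.zero_eta, Pi.smul_apply, smul_eq_mul, vecMul,
        dotProduct, Fin.sum_univ_two, Matrix.smul_apply, of_apply, cons_val]
      linear_combination x * (B * A) 1 1 * hx
    · simp [hP, flagNormalizer, vecMul, dotProduct]
  · rw [hPdet]
    ring
  · ring
  · calc (z * t) • !![lam, 1; 0, 1]
        = (x * x) • ((B * A) 1 1 • !![lam * (s * t) ^ 2, (s * t) ^ 2; 0, (s * t) ^ 2]) := by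
          ext i j
          fin_cases i <;> fin_cases j <;> simp [hz] <;> ring
      _ = (x * x) • ((flagNormalizer (B * A))ᵀ * (B * A) * flagNormalizer (B * A)) := by
          rw [transpose_flagNormalizer_mul_mul, hjac, hdet]
      _ = Pᵀ * B * (A * P) := by
          simp only [hP, transpose_smul, Matrix.smul_mul, Matrix.mul_smul, smul_smul,
            Matrix.mul_assoc]

theorem isNilsoliton_gradedLaw_adjugate_mul (hR : R ∈ orthogonalGroup (Fin 2) ℝ)
    (hst : t ^ 2 = s ^ 2 + 1)
    (hsum : A * Aᵀ + Rᵀ * (A * Aᵀ) * R = !![10 - t ^ 2, 0; 0, 6 - t ^ 2]) :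
    IsNilsoliton (gradedLaw A (A.adjugate * R) ![2, 0] s t) := by
  have hRRt : R * Rᵀ = 1 := mem_orthogonalGroup_iff (Fin 2) ℝ |>.1 hR
  have hRtR : Rᵀ * R = 1 := mem_orthogonalGroup_iff' (Fin 2) ℝ |>.1 hR
  have htrace : (A * Aᵀ).trace = 8 - t ^ 2 := by
    have hconj : (Rᵀ * (A * Aᵀ) * R).trace = (A * Aᵀ).trace := by
      rw [trace_mul_cycle, hRRt, one_mul]
    have := congrArg trace hsum
    rw [trace_add, hconj, trace_fin_two_of] at this
    linarith
  have hBBt : A.adjugate * R * (A.adjugate * R)ᵀ = A.adjugate * A.adjugateᵀ := by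
    rw [transpose_mul, Matrix.mul_assoc, ← Matrix.mul_assoc R, hRRt, one_mul]
  have hBtB : (A.adjugate * R)ᵀ * (A.adjugate * R) = Rᵀ * (A.adjugateᵀ * A.adjugate) * R := by
    simp only [transpose_mul, Matrix.mul_assoc]
  have hV₂ : Aᵀ * A + A.adjugate * A.adjugateᵀ = (8 - t ^ 2) • 1 := by
    rw [transpose_mul_self_add_adjugate_mul_transpose, htrace]
  apply isNilsoliton_gradedLaw hst htrace
  · have := congrArg trace hV₂
    rw [trace_add, trace_mul_comm, htrace, trace_smul, trace_one, Fintype.card_fin] at this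
    rw [hBBt]
    simp only [smul_eq_mul, Nat.cast_ofNat] at this
    linarith
  · rw [hBBt, hV₂]
  · rw [hBtB, eq_sub_of_add_eq' (mul_transpose_add_transpose_adjugate_mul A), htrace,
      Matrix.mul_sub, Matrix.sub_mul, Matrix.mul_smul, mul_one, Matrix.smul_mul, hRtR,
      ← sub_add, sub_add_eq_add_sub, hsum]
    ext i j
    fin_cases i <;> fin_cases j <;> norm_num

theorem isEinsteinNilradical_law13_of_orthogonal (hN : N.IsSymm) (hN00 : 0 < N 0 0)
    (hNdet : 0 < N.det) (hR : R ∈ orthogonalGroup (Fin 2) ℝ) (hT : 1 < T)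
    (hk : k ^ 2 = T * (T - 1)) (hsum : N + Rᵀ * N * R = !![10 - T, 0; 0, 6 - T])
    (hjac : (R * N) 0 1 - (R * N) 1 0 = k) (hflag : N 0 0 * R 1 1 - N 0 1 * R 0 1 ≠ 0)
    (hdet : N.det * R.det = lam * k ^ 2) : IsEinsteinNilradical (law13 lam) := by
  obtain ⟨s, t, hs, ht, hst, rfl, rfl⟩ := exists_mul_eq_of_sq_eq_mul_sub_one hT hk
  obtain ⟨A, hA01, rfl⟩ := exists_lowerTriangular_mul_transpose_eq hN hN00 hNdet
  have hAdet : A.det ≠ 0 := by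
    rintro h
    simp [h] at hNdet
  have hdiag : A 0 0 ≠ 0 ∧ A 1 1 ≠ 0 := by simpa [det_fin_two, hA01] using hAdet
  apply isEinsteinNilradical_law13_of_gradedLaw (α := 2 * A 0 0)
    (isNilsoliton_gradedLaw_adjugate_mul hR hst hsum)
    ((isUnit_iff_isUnit_det A).2 hAdet.isUnit) hs ht
  · funext i
    fin_cases i <;> simp [vecMul, dotProduct, hA01]
  · exact mul_ne_zero two_ne_zero hdiag.1
  · rw [adjugate_mul_mul_sub_fin_two, hjac]
  · have h11 : A 0 0 * (A.adjugate * R * A) 1 1 =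
        A 1 1 * ((A * Aᵀ) 0 0 * R 1 1 - (A * Aᵀ) 0 1 * R 0 1) := by
      simp only [adjugate_fin_two, mul_apply, Fin.sum_univ_two, transpose_apply, of_apply,
        cons_val, hA01]
      ring
    exact right_ne_zero_of_mul (h11 ▸ mul_ne_zero hdiag.2 hflag)
  · rw [← hdet]
    simp only [det_mul, det_adjugate, det_transpose, Fintype.card_fin, Nat.add_one_sub_one, pow_one]
    ring

theorem exists_mem_Ioo_of_neg (hlam : lam < 0) :
    ∃ T ∈ Set.Ioo (1 : ℝ) 4, 15 * (4 - T) / 4 + lam * (T * (T - 1)) = 0 := by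
  apply intermediate_value_Ioo' (f := fun T : ℝ ↦ 15 * (4 - T) / 4 + lam * (T * (T - 1)))
    (by norm_num) (by fun_prop)
  exact ⟨by linarith, by norm_num⟩

theorem exists_mem_Ioo_of_pos (hlam : 0 < lam) :
    ∃ T ∈ Set.Ioo (1 : ℝ) 4,
      lam * (T * (T - 1)) * (64 - 15 * T) - 15 * (4 - T) / 4 * (8 - T) ^ 2 = 0 := by
  apply intermediate_value_Ioo
    (f := fun T : ℝ ↦ lam * (T * (T - 1)) * (64 - 15 * T) - 15 * (4 - T) / 4 * (8 - T) ^ 2)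
    (by norm_num) (by fun_prop)
  exact ⟨by norm_num, by linarith⟩

theorem isEinsteinNilradical_law13_of_neg (hlam : lam < 0) :
    IsEinsteinNilradical (law13 lam) := by
  obtain ⟨T, ⟨hT1, hT4⟩, hT⟩ := exists_mem_Ioo_of_neg hlam
  have hT0 : 0 < T * (T - 1) := mul_pos (by linarith) (by linarith)
  obtain ⟨k, hk⟩ : ∃ k : ℝ, k ^ 2 = T * (T - 1) := ⟨_, Real.sq_sqrt hT0.le⟩
  have hNdet : (!![5 - T / 2, k / 2; k / 2, 3 - T / 2]).det = 15 * (4 - T) / 4 := by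
    rw [det_fin_two_of]
    linear_combination -hk / 4
  apply isEinsteinNilradical_law13_of_orthogonal (N := !![5 - T / 2, k / 2; k / 2, 3 - T / 2])
    (R := !![1, 0; 0, -1]) (isSymm_fin_two_of _ _ _) _ _ _ hT1 hk
  · rw [reflection_conj_add]
    ring_nf
  · simp
  · change (5 - T / 2) * -1 - k / 2 * 0 ≠ 0
    linarith
  · rw [hNdet, det_fin_two_of, hk]
    linear_combination -hT
  · change 0 < 5 - T / 2
    linarith
  · rw [hNdet]
    linarith
  · rw [mem_orthogonalGroup_iff]
    ext i j
    fin_cases i <;> fin_cases j <;> simp [mul_apply]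

theorem isEinsteinNilradical_law13_of_pos (hlam : 0 < lam) :
    IsEinsteinNilradical (law13 lam) := by
  obtain ⟨T, ⟨hT1, hT4⟩, hT⟩ := exists_mem_Ioo_of_pos hlam
  have hT0 : 0 < T * (T - 1) := mul_pos (by linarith) (by linarith)
  have hw0 : 0 < 64 - 15 * T := by linarith
  have hr : 0 < 8 - T := by linarith
  obtain ⟨k, hk⟩ : ∃ k : ℝ, k ^ 2 = T * (T - 1) := ⟨_, Real.sq_sqrt hT0.le⟩
  obtain ⟨w, hwpos, hw⟩ : ∃ w : ℝ, 0 < w ∧ w ^ 2 = 64 - 15 * T :=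
    ⟨_, Real.sqrt_pos.2 hw0, Real.sq_sqrt hw0.le⟩
  obtain ⟨c, hc⟩ : ∃ c, c * (8 - T) = w := ⟨w / (8 - T), div_mul_cancel₀ _ hr.ne'⟩
  obtain ⟨σ, hσ⟩ : ∃ σ, σ * (8 - T) = k := ⟨k / (8 - T), div_mul_cancel₀ _ hr.ne'⟩
  obtain ⟨y, hy⟩ : ∃ y, y * w = -k := ⟨-k / w, div_mul_cancel₀ _ hwpos.ne'⟩
  have hc0 : 0 < c := pos_of_mul_pos_left (hc ▸ hwpos) hr.le
  have hcircle : c ^ 2 + σ ^ 2 = 1 := by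
    apply mul_right_cancel₀ (pow_ne_zero 2 hr.ne')
    linear_combination (c * (8 - T) + w) * hc + (σ * (8 - T) + k) * hσ + hw + hk
  have hcy : c * y = -σ := by
    apply mul_right_cancel₀ hr.ne'
    linear_combination y * hc + hy + hσ
  have hNdet : (!![4 - T / 2 + 1, y; y, 4 - T / 2 - 1]).det = lam * k ^ 2 := by
    rw [det_fin_two_of]
    apply mul_right_cancel₀ hw0.ne'
    linear_combination y ^ 2 * hw - (y * w - k) * hy - hk - hT - lam * (64 - 15 * T) * hk
  apply isEinsteinNilradical_law13_of_orthogonal (R := !![c, σ; -σ, c])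
    (isSymm_fin_two_of (4 - T / 2 + 1) y (4 - T / 2 - 1)) _ _ _ hT1 hk
  · rw [rotation_conj_add hcircle hcy]
    ring_nf
  · simp only [mul_apply, Fin.sum_univ_two, of_apply, cons_val]
    linear_combination hσ
  · have hflag : 0 < (4 - T / 2 + 1) * c ^ 2 + σ ^ 2 := by
      have : 0 < 4 - T / 2 + 1 := by linarith
      positivity
    have heq : ((4 - T / 2 + 1) * c - y * σ) * c = (4 - T / 2 + 1) * c ^ 2 + σ ^ 2 := by
      linear_combination -σ * hcy
    exact left_ne_zero_of_mul (heq.trans_ne hflag.ne')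
  · rw [hNdet, det_fin_two_of]
    linear_combination lam * k ^ 2 * hcircle
  · change 0 < 4 - T / 2 + 1
    linarith
  · rw [hNdet, hk]
    positivity
  · exact (of_mem_specialOrthogonalGroup_fin_two_iff.2 ⟨rfl, (neg_neg σ).symm, hcircle⟩).1

end Law13

/-- for every `λ ≠ 0`, `g_{1.3(i_λ)}` is an Einstein nilradical. -/
theorem stmt_8 (lam : ℝ) (hlam : lam ≠ 0) :
    IsEinsteinNilradical (law13 lam) := by
  rcases hlam.lt_or_gt with hneg | hpos
  · exact isEinsteinNilradical_law13_of_neg hneg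
  · exact isEinsteinNilradical_law13_of_pos hpos
end
end

section
/- Let μ be the Lie algebra law of g_{2.2}, let X = diag(1,−1,0,−1,0,1,0) and g_t = exp(tX) ∈ GL_7(ℝ). Then as t → ∞ the laws g_t·μ converge (coefficientwise on the canonical basis) to the law μ̃₀ with nonzero brackets [e_1,e_2]=e_5, [e_1,e_3]=e_6, [e_1,e_4]=2e_7, [e_2,e_3]=e_4, [e_2,e_6]=e_7, [e_3,e_5]=−e_7; that is, μ degenerates nontrivially to μ̃₀ under the one-parameter subgroup exp(tX). -/
open Matrix BigOperators Polynomial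

noncomputable section

/-- structure constants of `g_{2.2}`. -/
def c22 : Fin 7 → Fin 7 → Fin 7 → ℝ := fun i j =>
  if i = 0 ∧ j = 1 then Pi.single 4 1
  else if i = 0 ∧ j = 2 then Pi.single 5 1
  else if i = 0 ∧ j = 3 then Pi.single 6 2
  else if i = 1 ∧ j = 2 then Pi.single 3 1
  else if i = 1 ∧ j = 5 then Pi.single 6 1
  else if i = 2 ∧ j = 4 then Pi.single 6 (-1)
  else if i = 2 ∧ j = 5 then Pi.single 6 1
  else 0

/-- the Lie algebra law of `g_{2.2}`. -/
def law22 : Law 7 := mkLaw c22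

/-- structure constants of the degeneration `μ̃₀` of `g_{2.2}`. -/
def c22t : Fin 7 → Fin 7 → Fin 7 → ℝ := fun i j =>
  if i = 0 ∧ j = 1 then Pi.single 4 1
  else if i = 0 ∧ j = 2 then Pi.single 5 1
  else if i = 0 ∧ j = 3 then Pi.single 6 2
  else if i = 1 ∧ j = 2 then Pi.single 3 1
  else if i = 1 ∧ j = 5 then Pi.single 6 1
  else if i = 2 ∧ j = 4 then Pi.single 6 (-1)
  else 0

/-- the law `μ̃₀`. -/
def law22t : Law 7 := mkLaw c22t

/-!
For a diagonal matrix `X = diag(d)`, acting on a law by `exp(tX)` multiplies the structure constant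
`c i j k` by `exp(t (d k - d i - d j))`. When all weights `d k - d i - d j` that occur are
nonpositive, the laws converge as `t → ∞` to the part of weight zero. For `g_{2.2}` the only bracket
of nonzero weight is `[e_3, e_6] = e_7`, of weight `-1`.

The limit is not isomorphic to `g_{2.2}`: every `e_i` satisfies `ad(e_i)² = 0` in the limit,
whereas in `g_{2.2}` one has `ad(v)² e_1 = -v_3² e_7`, so the solutions of `ad(v)² = 0` lie in a
hyperplane. Here `e_{i+1}` is `bVec i`.
-/

section Degeneration

open Filter Topology

theorem exp_smul_diagonal {ι : Type*} [Fintype ι] [DecidableEq ι] (d : ι → ℝ) (t : ℝ) :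
    NormedSpace.exp (t • diagonal d) = diagonal fun i => Real.exp (t * d i) := by
  rw [← diagonal_smul, exp_diagonal]
  congr 1
  funext i
  rw [Pi.coe_exp, ← Real.exp_eq_exp_ℝ, Pi.smul_apply, smul_eq_mul]

theorem inv_exp_smul_diagonal {ι : Type*} [Fintype ι] [DecidableEq ι] (d : ι → ℝ) (t : ℝ) :
    (NormedSpace.exp (t • diagonal d))⁻¹ = diagonal fun i => Real.exp (-(t * d i)) := by
  rw [← Matrix.exp_neg, ← neg_smul, exp_smul_diagonal]
  simp only [neg_mul]

variable {n : ℕ}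

theorem diagonal_mulVec_mkLaw (a b : Fin n → ℝ) (c : Fin n → Fin n → Fin n → ℝ)
    (X Y : Fin n → ℝ) :
    diagonal a *ᵥ mkLaw c (diagonal b *ᵥ X) (diagonal b *ᵥ Y) =
      mkLaw (fun i j k => a k * b i * b j * c i j k) X Y := by
  funext k
  simp only [mkLaw, mulVec_diagonal, Finset.mul_sum]
  refine Finset.sum_congr rfl fun i _ => Finset.sum_congr rfl fun j _ => ?_
  ring

theorem exp_smul_diagonal_mulVec_mkLaw (d : Fin n → ℝ) (c : Fin n → Fin n → Fin n → ℝ) (t : ℝ)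
    (X Y : Fin n → ℝ) :
    NormedSpace.exp (t • diagonal d) *ᵥ
        mkLaw c ((NormedSpace.exp (t • diagonal d))⁻¹ *ᵥ X)
          ((NormedSpace.exp (t • diagonal d))⁻¹ *ᵥ Y) =
      mkLaw (fun i j k => Real.exp (t * (d k - d i - d j)) * c i j k) X Y := by
  rw [inv_exp_smul_diagonal, exp_smul_diagonal, diagonal_mulVec_mkLaw]
  simp only [← Real.exp_add]
  ring_nf

theorem tendsto_mkLaw_apply {α : Type*} {l : Filter α} {c : α → Fin n → Fin n → Fin n → ℝ}
    {c' : Fin n → Fin n → Fin n → ℝ}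
    (h : ∀ i j k, Tendsto (fun a => c a i j k) l (𝓝 (c' i j k))) (X Y : Fin n → ℝ) (k : Fin n) :
    Tendsto (fun a => mkLaw (c a) X Y k) l (𝓝 (mkLaw c' X Y k)) :=
  tendsto_finsetSum _ fun i _ => tendsto_finsetSum _ fun j _ =>
    ((h i j k).sub (h j i k)).const_mul (X i * Y j)

theorem tendsto_exp_mul_mul_atTop {w x : ℝ} (h : x ≠ 0 → w ≤ 0) :
    Tendsto (fun t => Real.exp (t * w) * x) atTop (𝓝 (if w = 0 then x else 0)) := by
  by_cases hw : w = 0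
  · simp [hw]
  by_cases hx : x = 0
  · simp [hx]
  have h_decay : Tendsto (fun t => Real.exp (t * w)) atTop (𝓝 0) :=
    Real.tendsto_exp_atBot.comp
      (tendsto_id.atTop_mul_const_of_neg (lt_of_le_of_ne (h hx) hw))
  simpa [hw] using h_decay.mul_const x

/-- The part of weight zero of a table of structure constants, for the grading of `ℝ^n` in which
the `i`-th canonical basis vector has degree `d i`. -/
def weightZeroPart (d : Fin n → ℝ) (c : Fin n → Fin n → Fin n → ℝ) : Fin n → Fin n → Fin n → ℝ :=
  fun i j k => if d k - d i - d j = 0 then c i j k else 0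

theorem tendsto_exp_smul_diagonal_mulVec_mkLaw {d : Fin n → ℝ} {c : Fin n → Fin n → Fin n → ℝ}
    (h : ∀ i j k, c i j k ≠ 0 → d k - d i - d j ≤ 0) (X Y : Fin n → ℝ) (k : Fin n) :
    Tendsto
      (fun t : ℝ => (NormedSpace.exp (t • diagonal d) *ᵥ
        mkLaw c ((NormedSpace.exp (t • diagonal d))⁻¹ *ᵥ X)
          ((NormedSpace.exp (t • diagonal d))⁻¹ *ᵥ Y)) k)
      atTop (𝓝 (mkLaw (weightZeroPart d c) X Y k)) := by
  simp only [exp_smul_diagonal_mulVec_mkLaw]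
  exact tendsto_mkLaw_apply (fun i j k => tendsto_exp_mul_mul_atTop (h i j k)) X Y k

end Degeneration

section Sandwich

variable {n : ℕ}

/-- The elements `x` with `ad(x)² = 0`, known as sandwich elements. Whether they span is an
isomorphism invariant of the law. -/
def sandwichElements (μ : Law n) : Set (Fin n → ℝ) := {x | ∀ y, μ x (μ x y) = 0}

theorem act_act_self (g : GL (Fin n) ℝ) (μ : Law n) (x y : Fin n → ℝ) :
    act g μ x (act g μ x y) = g.val *ᵥ
      μ (g⁻¹.val *ᵥ x) (μ (g⁻¹.val *ᵥ x) (g⁻¹.val *ᵥ y)) := by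
  simp only [act, mulVec_mulVec, Units.inv_mul, one_mulVec]

theorem inv_mulVec_mem_sandwichElements {g : GL (Fin n) ℝ} {μ : Law n} {x : Fin n → ℝ}
    (hx : x ∈ sandwichElements (act g μ)) : g⁻¹.val *ᵥ x ∈ sandwichElements μ := by
  intro y
  have h := congrArg (g⁻¹.val *ᵥ ·) (hx (g.val *ᵥ y))
  simpa only [act_act_self, mulVec_mulVec, Units.inv_mul, one_mulVec, mulVec_zero] using h

theorem span_sandwichElements_eq_top_of_act {g : GL (Fin n) ℝ} {μ : Law n}
    (h : Submodule.span ℝ (sandwichElements (act g μ)) = ⊤) :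
    Submodule.span ℝ (sandwichElements μ) = ⊤ := by
  have h_surj : Function.Surjective (mulVecLin g⁻¹.val) :=
    mulVec_surjective_iff_isUnit.mpr g⁻¹.isUnit
  rw [eq_top_iff, ← LinearMap.range_eq_top.mpr h_surj, LinearMap.range_eq_map, ← h,
    Submodule.map_span_le]
  exact fun x hx => Submodule.subset_span (inv_mulVec_mem_sandwichElements hx)

end Sandwich

section NilpotentLaw

local notation "degrees" => (![1, -1, 0, -1, 0, 1, 0] : Fin 7 → ℝ)

theorem c22_weight_nonpos {i j k : Fin 7} (h : c22 i j k ≠ 0) :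
    degrees k - degrees i - degrees j ≤ 0 := by
  unfold c22 at h
  split_ifs at h with h_ij h_ij h_ij h_ij h_ij h_ij h_ij
  case neg => exact absurd rfl h
  all_goals
    obtain ⟨rfl, rfl⟩ := h_ij
    obtain rfl : k = _ := by_contra fun hk => h (Pi.single_eq_of_ne hk _)
    simp

theorem weightZeroPart_c22 : weightZeroPart degrees c22 = c22t := by
  funext i j k
  fin_cases i <;> fin_cases j <;> fin_cases k <;> simp [weightZeroPart, c22, c22t]

theorem tendsto_exp_smul_diagonal_mulVec_law22 (X Y : Fin 7 → ℝ) (k : Fin 7) :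
    Filter.Tendsto
      (fun t : ℝ => (NormedSpace.exp (t • diagonal degrees) *ᵥ
        law22 ((NormedSpace.exp (t • diagonal degrees))⁻¹ *ᵥ X)
          ((NormedSpace.exp (t • diagonal degrees))⁻¹ *ᵥ Y)) k)
      Filter.atTop (nhds (law22t X Y k)) := by
  rw [law22, law22t, ← weightZeroPart_c22]
  have h_weight : ∀ i j k, c22 i j k ≠ 0 → degrees k - degrees i - degrees j ≤ 0 :=
    fun _ _ _ => c22_weight_nonpos
  exact tendsto_exp_smul_diagonal_mulVec_mkLaw (n := 7) (d := degrees) h_weight X Y k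

theorem law22_apply (X Y : Fin 7 → ℝ) :
    law22 X Y = ![0, 0, 0, X 1 * Y 2 - X 2 * Y 1, X 0 * Y 1 - X 1 * Y 0, X 0 * Y 2 - X 2 * Y 0,
      2 * (X 0 * Y 3 - X 3 * Y 0) + (X 1 * Y 5 - X 5 * Y 1) - (X 2 * Y 4 - X 4 * Y 2)
        + (X 2 * Y 5 - X 5 * Y 2)] := by
  funext k
  fin_cases k <;> simp [law22, mkLaw, c22, Fin.sum_univ_seven] <;> ring

theorem law22t_apply (X Y : Fin 7 → ℝ) :
    law22t X Y = ![0, 0, 0, X 1 * Y 2 - X 2 * Y 1, X 0 * Y 1 - X 1 * Y 0, X 0 * Y 2 - X 2 * Y 0,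
      2 * (X 0 * Y 3 - X 3 * Y 0) + (X 1 * Y 5 - X 5 * Y 1) - (X 2 * Y 4 - X 4 * Y 2)] := by
  funext k
  fin_cases k <;> simp [law22t, mkLaw, c22t, Fin.sum_univ_seven] <;> ring

theorem law22_law22_self (X Y : Fin 7 → ℝ) :
    law22 X (law22 X Y) =
      Pi.single 6 (3 * X 0 * (X 1 * Y 2 - X 2 * Y 1) + X 2 * (X 0 * Y 2 - X 2 * Y 0)) := by
  rw [law22_apply, law22_apply]
  funext k
  fin_cases k <;> simp
  ring

theorem law22t_law22t_self (X Y : Fin 7 → ℝ) :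
    law22t X (law22t X Y) = Pi.single 6 (3 * X 0 * (X 1 * Y 2 - X 2 * Y 1)) := by
  rw [law22t_apply, law22t_apply]
  funext k
  fin_cases k <;> simp
  ring

theorem apply_two_eq_zero_of_mem_sandwichElements_law22 {v : Fin 7 → ℝ}
    (hv : v ∈ sandwichElements law22) : v 2 = 0 := by
  have h := hv (bVec 0)
  rw [law22_law22_self, Pi.single_eq_zero_iff] at h
  simpa [bVec] using h

theorem span_sandwichElements_law22_ne_top :
    Submodule.span ℝ (sandwichElements law22) ≠ ⊤ := by
  intro h_top
  have h_le : Submodule.span ℝ (sandwichElements law22) ≤ LinearMap.ker (LinearMap.proj 2) :=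
    Submodule.span_le.mpr fun _ hv => apply_two_eq_zero_of_mem_sandwichElements_law22 hv
  have h_mem : bVec 2 ∈ LinearMap.ker (LinearMap.proj (R := ℝ) (φ := fun _ : Fin 7 => ℝ) 2) :=
    h_le (h_top ▸ Submodule.mem_top)
  simp [bVec] at h_mem

theorem bVec_mem_sandwichElements_law22t (i : Fin 7) : bVec i ∈ sandwichElements law22t := by
  intro y
  rw [law22t_law22t_self, Pi.single_eq_zero_iff]
  fin_cases i <;> simp [bVec]

theorem span_sandwichElements_law22t : Submodule.span ℝ (sandwichElements law22t) = ⊤ := by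
  rw [eq_top_iff, ← (Pi.basisFun ℝ (Fin 7)).span_eq, Submodule.span_le]
  rintro _ ⟨i, rfl⟩
  rw [Pi.basisFun_apply]
  exact Submodule.subset_span (bVec_mem_sandwichElements_law22t i)

theorem act_law22_ne_law22t (g : GL (Fin 7) ℝ) : act g law22 ≠ law22t := fun hg =>
  span_sandwichElements_law22_ne_top <|
    span_sandwichElements_eq_top_of_act (hg ▸ span_sandwichElements_law22t)

end NilpotentLaw

/-- under the one-parameter group `exp(tX)` with
`X = diag(1,−1,0,−1,0,1,0)`, the law of `g_{2.2}` degenerates nontrivially to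
`μ̃₀` as `t → ∞` (coefficientwise on the canonical basis). -/
theorem stmt_10 :
    (∀ i j k : Fin 7,
      Filter.Tendsto
        (fun t : ℝ =>
          ((NormedSpace.exp
              (t • Matrix.diagonal (![1, -1, 0, -1, 0, 1, 0] : Fin 7 → ℝ))).mulVec
            (law22
              ((NormedSpace.exp
                  (t • Matrix.diagonal (![1, -1, 0, -1, 0, 1, 0] : Fin 7 → ℝ)))⁻¹.mulVec
                (bVec i))
              ((NormedSpace.exp
                  (t • Matrix.diagonal (![1, -1, 0, -1, 0, 1, 0] : Fin 7 → ℝ)))⁻¹.mulVec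
                (bVec j)))) k)
        Filter.atTop (nhds (law22t (bVec i) (bVec j) k))) ∧
    ¬ ∃ g : GL (Fin 7) ℝ, act g law22 = law22t := by
  exact ⟨fun i j k => tendsto_exp_smul_diagonal_mulVec_law22 (bVec i) (bVec j) k,
    fun ⟨g, hg⟩ => act_law22_ne_law22t g hg⟩
end
end
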